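/- There exists a constant C > 0 such that for every integer n ≥ 2 there exist a lattice Λ ⊆ ℝⁿ and a radius r > 0 with Λ + B_rⁿ = ℝⁿ and vol(B_rⁿ)/det(Λ) ≤ C · n · (ln n)^β, where β := (1/2)·log₂(8πe/(3√3)). Equivalently, the optimal lattice covering density satisfies Θ_n ≤ C n (ln n)^β. -/

import Mathlib

open MeasureTheory Pointwise

noncomputable section

/-- The lattice generated by vectors `b`. -/
def latticeSet {n : ℕ} (b : Fin n → EuclideanSpace ℝ (Fin n)) :
    Set (EuclideanSpace ℝ (Fin n)) :=
  {x | ∃ c : Fin n → ℤ, x = ∑ i, (c i : ℝ) • b i}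

/-- The determinant of the lattice generated by `b`. -/
def latticeDet {n : ℕ} (b : Fin n → EuclideanSpace ℝ (Fin n)) : ℝ :=
  |(Matrix.of fun i j => b j i).det|

/-- Vertex set of the parallelepiped starting at `x` generated by `v`. -/
def vertexSet {n : ℕ} (x : EuclideanSpace ℝ (Fin n))
    (v : Fin n → EuclideanSpace ℝ (Fin n)) : Set (EuclideanSpace ℝ (Fin n)) :=
  {y | ∃ lam : Fin n → ℝ, (∀ i, lam i = 0 ∨ lam i = 1) ∧ y = x + ∑ i, lam i • v i}

/-- `P` is a fundamental parallelepiped of the lattice `Λ` with determinant `detΛ`. -/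
def IsFundParallelepiped {n : ℕ} (Λ : Set (EuclideanSpace ℝ (Fin n))) (detΛ : ℝ)
    (P : Set (EuclideanSpace ℝ (Fin n))) : Prop :=
  ∃ x v, LinearIndependent ℝ v ∧ P = convexHull ℝ (vertexSet x v) ∧
    vertexSet x v ⊆ Λ ∧ volume P = ENNReal.ofReal detΛ

/-- `(Λ(b), B_r)` is a lattice covering of `ℝⁿ`. -/
def IsLatticeCovering {n : ℕ} (b : Fin n → EuclideanSpace ℝ (Fin n)) (r : ℝ) : Prop :=
  LinearIndependent ℝ b ∧ latticeSet b + Metric.closedBall 0 r = Set.univ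

/-- `(Λ(b), B_r)` is a robust lattice covering of `ℝⁿ`. -/
def IsRobustCovering {n : ℕ} (b : Fin n → EuclideanSpace ℝ (Fin n)) (r : ℝ) : Prop :=
  IsLatticeCovering b r ∧
  ∀ c : EuclideanSpace ℝ (Fin n),
    ∃ P, IsFundParallelepiped (latticeSet b) (latticeDet b) P ∧
      P ⊆ Metric.closedBall c r

/-- The density of the lattice covering `(Λ(b), B_r)`. -/
def coveringDensity {n : ℕ} (b : Fin n → EuclideanSpace ℝ (Fin n)) (r : ℝ) : ℝ :=
  (volume (Metric.closedBall (0 : EuclideanSpace ℝ (Fin n)) r)).toReal / latticeDet b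

/-- `ν_d`, the volume of the ball of radius `√d` in `ℝ^d`. -/
def nu (d : ℕ) : ℝ :=
  (volume (Metric.closedBall (0 : EuclideanSpace ℝ (Fin d)) (Real.sqrt d))).toReal

/-!
Write `n = N + 2M` with `4ᴹ ≈ log n`. Let `F = ℤ/q` with `q` a prime of polynomial size in `N`, let
`G = Fᵏ`, `v ≈ N / 1000`, and let `S` be a set of exactly `v |G|` integer points in a ball of `ℝᴺ`
whose volume is about `v |G|`. Counting with binomial weights and Fourier analysis on `ℤ/q` shows
that `S` satisfies few linear relations modulo `q`, so that by Bonferroni's inequalities the image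
of `S` under a random linear map `Fᴺ → G` behaves like `v |G|` independent points of `G`: for some
map it misses only a set `U` of density `O(e⁻ᵛ)`.

The missed points are removed with `M` scaled copies of the hexagonal lattice. Every point of the
plane lies within distance `√(4/3)` of all four vertices of some unit rhombus of this lattice, so
if `ℤ²` is mapped to `G` as well, a target is missed only when all four translates of it by the
vertices lie in `U`. For a suitable homomorphism `ℤ² → G` this replaces `U` by a set of density
about the fourth power of the density of `U`, and after `M` copies nothing is missed.

The lattice is the kernel of the resulting homomorphism `ℤᴺ ⊕ (ℤ²)ᴹ → G`. Each plane costs a factor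
`8πe / (3√3)` in the density, and `(8πe / (3√3))ᴹ = O((log n)^β)`.
-/

/-! ### Random linear maps -/

section RandomLinearMaps

open Finset
open scoped Classical

variable {F V G : Type*} [Field F] [AddCommGroup V] [Module F V] [AddCommGroup G] [Module F G]

lemma exists_linearMap_apply_eq {κ : Type*} {w : κ → V} (hw : LinearIndependent F w)
    (y : κ → G) : ∃ L : V →ₗ[F] G, ∀ t, L (w t) = y t := by
  obtain ⟨L, hL⟩ := LinearMap.exists_extend ((Module.Basis.span hw).constr F y)
  refine ⟨L, fun t ↦ ?_⟩
  have hbasis : ((Module.Basis.span hw t : Submodule.span F (Set.range w)) : V) = w t :=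
    congrArg Subtype.val (Module.Basis.mk_apply _ _ t) |>.trans rfl
  calc L (w t) = (L ∘ₗ Submodule.subtype _) (Module.Basis.span hw t) := by
        rw [LinearMap.comp_apply, Submodule.subtype_apply, hbasis]
    _ = y t := by rw [hL, Module.Basis.constr_basis]

lemma card_linearMap_vanishing_mul [Fintype G] [Fintype (V →ₗ[F] G)] {J : Finset V}
    (hJ : LinearIndepOn F id (J : Set V)) :
    #{L : V →ₗ[F] G | ∀ t ∈ J, L t = 0} * Fintype.card G ^ #J = Fintype.card (V →ₗ[F] G) := by
  let eval : (V →ₗ[F] G) →+ (J → G) :=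
    { toFun := fun L t ↦ L t
      map_zero' := rfl
      map_add' := fun _ _ ↦ rfl }
  have hsurj : Function.Surjective eval := fun y ↦
    (exists_linearMap_apply_eq hJ y).imp fun L hL ↦ funext hL
  have hker : Nat.card eval.ker = #{L : V →ₗ[F] G | ∀ t ∈ J, L t = 0} := by
    rw [← Fintype.card_subtype, ← Nat.card_eq_fintype_card]
    refine Nat.card_congr (Equiv.subtypeEquivRight fun L ↦ ?_)
    simp [eval, AddMonoidHom.mem_ker, funext_iff]
  have hindex : eval.ker.index = Fintype.card G ^ #J := by
    rw [AddSubgroup.index_ker, AddMonoidHom.range_eq_top.mpr hsurj, AddSubgroup.card_top,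
      Nat.card_eq_fintype_card, Fintype.card_fun, Fintype.card_coe]
  rw [← hker, ← hindex, AddSubgroup.card_mul_index, Nat.card_eq_fintype_card]

variable (F) in
/-- The linearly independent `h`-element subsets of `A`. -/
def indepSubsets (A : Finset V) (h : ℕ) : Finset (Finset V) :=
  {J ∈ A.powersetCard h | LinearIndepOn F id (J : Set V)}

variable (F) in
/-- The pairs `(J, u)` with `J` a linearly independent `l`-element subset of `A` and
`u ∈ A \ J` in the span of `J`. They measure how far `A` is from being independent. -/
def dependencies (A : Finset V) (l : ℕ) : Finset (Finset V × V) :=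
  {p ∈ indepSubsets F A l ×ˢ A | p.2 ∉ p.1 ∧ p.2 ∈ Submodule.span F (p.1 : Set V)}

lemma mem_indepSubsets {A J : Finset V} {h : ℕ} :
    J ∈ indepSubsets F A h ↔ J ⊆ A ∧ #J = h ∧ LinearIndepOn F id (J : Set V) := by
  rw [indepSubsets, mem_filter, mem_powersetCard, and_assoc]

lemma mem_dependencies {A J : Finset V} {u : V} {l : ℕ} :
    (J, u) ∈ dependencies F A l ↔
      J ∈ indepSubsets F A l ∧ u ∈ A ∧ u ∉ J ∧ u ∈ Submodule.span F (J : Set V) := by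
  rw [dependencies, mem_filter, mem_product, and_assoc]

lemma sum_card_vanishing_mul [Fintype G] [Fintype (V →ₗ[F] G)] {α : Type*} (P : Finset α)
    (j : α → Finset V) (h : ℕ) (hj : ∀ p ∈ P, LinearIndepOn F id (j p : Set V) ∧ #(j p) = h) :
    (∑ L : V →ₗ[F] G, #{p ∈ P | ∀ t ∈ j p, L t = 0}) * Fintype.card G ^ h =
      #P * Fintype.card (V →ₗ[F] G) := by
  have hswap : ∑ L : V →ₗ[F] G, #{p ∈ P | ∀ t ∈ j p, L t = 0} =
      ∑ p ∈ P, #{L : V →ₗ[F] G | ∀ t ∈ j p, L t = 0} :=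
    sum_card_bipartiteAbove_eq_sum_card_bipartiteBelow _
  rw [hswap, sum_mul, ← smul_eq_mul #P, ← sum_const]
  refine sum_congr rfl fun p hp ↦ ?_
  rw [← (hj p hp).2, card_linearMap_vanishing_mul (hj p hp).1]

lemma sum_card_indepSubsets_mul [Fintype G] [Fintype (V →ₗ[F] G)] (S : Finset V) (h : ℕ) :
    (∑ L : V →ₗ[F] G, #(indepSubsets F {s ∈ S | L s = 0} h)) * Fintype.card G ^ h =
      #(indepSubsets F S h) * Fintype.card (V →ₗ[F] G) := by
  rw [← sum_card_vanishing_mul (indepSubsets F S h) id h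
    fun J hJ ↦ (mem_indepSubsets.mp hJ).2.symm]
  congr! 3 with L
  ext J
  simp only [mem_indepSubsets, mem_filter, subset_iff, id]
  grind

lemma sum_card_dependencies_mul [Fintype G] [Fintype (V →ₗ[F] G)] (S : Finset V) (l : ℕ) :
    (∑ L : V →ₗ[F] G, #(dependencies F {s ∈ S | L s = 0} l)) * Fintype.card G ^ l =
      #(dependencies F S l) * Fintype.card (V →ₗ[F] G) := by
  rw [← sum_card_vanishing_mul (dependencies F S l) Prod.fst l
    fun p hp ↦ (mem_indepSubsets.mp (mem_dependencies.mp hp).1).2.symm]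
  congr! 3 with L
  ext ⟨J, u⟩
  have hspan (hJ : ∀ t ∈ J, L t = 0) (hu : u ∈ Submodule.span F (J : Set V)) : L u = 0 :=
    Submodule.span_le (p := LinearMap.ker L).mpr hJ hu
  simp only [mem_dependencies, mem_indepSubsets, mem_filter, subset_iff]
  grind

lemma exists_dependency_extending {A I J : Finset V} (hI : I ⊆ A)
    (hI_indep : LinearIndepOn F id (I : Set V)) (hJ : J ⊆ A)
    (hJ_dep : ¬ LinearIndepOn F id (J : Set V)) :
    ∃ K u, (K, u) ∈ dependencies F A #K ∧ I ⊆ K ∧ K ⊆ I ∪ J := by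
  obtain ⟨b, hb_sub, hIb, hspan, hb⟩ := exists_linearIndepOn_id_extension hI_indep
    (Finset.coe_subset.mpr (subset_union_left (s₁ := I) (s₂ := J)))
  obtain ⟨K, rfl⟩ := ((I ∪ J).finite_toSet.subset hb_sub).exists_finset_coe
  rw [Finset.coe_subset] at hb_sub hIb
  obtain ⟨u, huJ, huK⟩ := not_subset.mp fun hJK : J ⊆ K ↦
    hJ_dep (hb.mono (Finset.coe_subset.mpr hJK))
  exact ⟨K, u, mem_dependencies.mpr ⟨mem_indepSubsets.mpr
    ⟨hb_sub.trans (union_subset hI hJ), rfl, hb⟩, hJ huJ, huK,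
    hspan (mem_coe.mpr (mem_union_right I huJ))⟩, hIb, hb_sub⟩

-- Every independent `I` extends inside `I ∪ J` to an independent `K` that misses a point of `J`;
-- at most `2 ^ #K` sets `I` give rise to the same `K`.
lemma sum_card_indepSubsets_le_of_dependent {A J : Finset V} {H : ℕ} (hJ : J ⊆ A)
    (hJ_card : #J ≤ H) (hJ_dep : ¬ LinearIndepOn F id (J : Set V)) :
    ∑ h ∈ range (H + 1), #(indepSubsets F A h) ≤
      ∑ l ∈ range (2 * H + 1), 2 ^ l * #(dependencies F A l) := by
  have hdisj : (range (H + 1) : Set ℕ).PairwiseDisjoint (indepSubsets F A) := by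
    refine fun h _ h' _ hne ↦ disjoint_left.mpr fun I hI hI' ↦ hne ?_
    rw [← (mem_indepSubsets.mp hI).2.1, (mem_indepSubsets.mp hI').2.1]
  have hcover : (range (H + 1)).biUnion (indepSubsets F A) ⊆
      (range (2 * H + 1)).biUnion fun l ↦
        (dependencies F A l).biUnion fun p ↦ p.1.powerset := by
    intro I hI
    obtain ⟨h, hh, hI⟩ := mem_biUnion.mp hI
    obtain ⟨hIA, hIh, hI_indep⟩ := mem_indepSubsets.mp hI
    obtain ⟨K, u, hKu, hIK, hK⟩ := exists_dependency_extending hIA hI_indep hJ hJ_dep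
    have hK_card := (card_le_card hK).trans (card_union_le I J)
    simp only [mem_range] at hh
    exact mem_biUnion.mpr ⟨#K, mem_range.mpr (by lia), mem_biUnion.mpr
      ⟨(K, u), hKu, mem_powerset.mpr hIK⟩⟩
  rw [← card_biUnion hdisj]
  refine (card_le_card hcover).trans (card_biUnion_le.trans (sum_le_sum fun l _ ↦ ?_))
  rw [mul_comm]
  refine card_biUnion_le_card_mul _ _ _ fun p hp ↦ ?_
  rw [card_powerset, (mem_indepSubsets.mp (mem_dependencies.mp hp).1).2.1]

lemma indicator_le_alternating_sum_choose (a : ℕ) {H : ℕ} (hH : Even H) :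
    (if a = 0 then (1 : ℝ) else 0) ≤ ∑ h ∈ range (H + 1), (-1 : ℝ) ^ h * a.choose h := by
  rcases a with _ | a
  · rw [sum_eq_single_of_mem 0 (by simp) fun h _ hh ↦ by
      rw [Nat.choose_eq_zero_of_lt (Nat.pos_of_ne_zero hh), Nat.cast_zero, mul_zero]]
    simp
  · have hsum := congrArg (Int.cast : ℤ → ℝ)
      (Int.alternating_sum_range_choose_eq_choose (n := a) (m := H))
    rw [hH.neg_one_pow, one_mul] at hsum
    push_cast at hsum
    rw [hsum, if_neg a.succ_ne_zero]
    positivity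

lemma indicator_empty_le_bonferroni (A : Finset V) {H : ℕ} (hH : Even H) :
    (if A = ∅ then (1 : ℝ) else 0) ≤
      ∑ h ∈ range (H + 1), (-1 : ℝ) ^ h * #(indepSubsets F A h) +
        ∑ l ∈ range (2 * H + 1), (2 : ℝ) ^ l * #(dependencies F A l) := by
  by_cases hindep : ∀ J ⊆ A, #J ≤ H → LinearIndepOn F id (J : Set V)
  · have hcard : ∀ h ∈ range (H + 1), #(indepSubsets F A h) = (#A).choose h := by
      intro h hh
      rw [indepSubsets, filter_true_of_mem, card_powersetCard]
      intro J hJ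
      obtain ⟨hJA, hJh⟩ := mem_powersetCard.mp hJ
      exact hindep J hJA (hJh.trans_le (mem_range_succ_iff.mp hh))
    rw [sum_congr rfl fun h hh ↦ by rw [hcard h hh]]
    simp only [← card_eq_zero (s := A)]
    exact (indicator_le_alternating_sum_choose #A hH).trans (le_add_of_nonneg_right (by positivity))
  · push Not at hindep
    obtain ⟨J, hJA, hJH, hJ_dep⟩ := hindep
    have hA : A ≠ ∅ := by
      rintro rfl
      rw [subset_empty.mp hJA, coe_empty] at hJ_dep
      exact hJ_dep (linearIndepOn_empty F id)
    have hneg : -∑ h ∈ range (H + 1), (#(indepSubsets F A h) : ℝ) ≤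
        ∑ h ∈ range (H + 1), (-1 : ℝ) ^ h * #(indepSubsets F A h) := by
      rw [← sum_neg_distrib]
      gcongr with h
      rcases neg_one_pow_eq_or ℝ h with hs | hs <;> rw [hs] <;> simp
    have hbound : ∑ h ∈ range (H + 1), (#(indepSubsets F A h) : ℝ) ≤
        ∑ l ∈ range (2 * H + 1), (2 : ℝ) ^ l * #(dependencies F A l) := mod_cast
      sum_card_indepSubsets_le_of_dependent hJA hJH hJ_dep
    rw [if_neg hA]
    linarith

/-- The tuples in `S` whose linear combination with coefficients `μ` lies in `S` again. -/
def relations {κ : Type*} [Fintype κ] (S : Finset V) (μ : κ → F) : Finset (κ → V) :=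
  {f ∈ Fintype.piFinset fun _ ↦ S | ∑ t, μ t • f t ∈ S}

variable (F) in
/-- For all nonzero coefficients `μ₁, …, μ_k` with `2 ≤ k ≤ L`, a proportion of at most `η / |F|ᵏ`
of the `k`-tuples `f` in `S` satisfies `∑ μ_t f_t ∈ S`. -/
def FewRelations [Fintype F] (S : Finset V) (η : ℝ) (L : ℕ) : Prop :=
  ∀ (κ : Type) [Fintype κ] (μ : κ → F), (∀ t, μ t ≠ 0) → 2 ≤ Fintype.card κ →
    Fintype.card κ ≤ L →
      (Fintype.card F : ℝ) ^ Fintype.card κ * #(relations S μ) ≤ η * (#S : ℝ) ^ Fintype.card κ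

lemma mem_relations {κ : Type*} [Fintype κ] {S : Finset V} {μ : κ → F} {f : κ → V} :
    f ∈ relations S μ ↔ (∀ t, f t ∈ S) ∧ ∑ t, μ t • f t ∈ S := by
  rw [relations, mem_filter, Fintype.mem_piFinset]

lemma card_relations_le_restrict_support {κ : Type*} [Fintype κ] (S : Finset V) (μ : κ → F) :
    #(relations S μ) ≤ #(relations S fun t : {t // μ t ≠ 0} ↦ μ t) *
      #S ^ (Fintype.card κ - Fintype.card {t // μ t ≠ 0}) := by
  have hpow : #S ^ (Fintype.card κ - Fintype.card {t // μ t ≠ 0}) =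
      #(Fintype.piFinset fun _ : {t // ¬μ t ≠ 0} ↦ S) := by
    rw [Fintype.card_piFinset, prod_const, card_univ, Fintype.card_subtype_compl (μ · ≠ 0)]
  rw [hpow, ← card_product]
  refine card_le_card_of_injOn (Equiv.piEquivPiSubtypeProd (μ · ≠ 0) fun _ ↦ V) (fun f hf ↦ ?_)
    (Equiv.injective _).injOn
  obtain ⟨hfS, hsum⟩ := mem_relations.mp (mem_coe.mp hf)
  refine mem_product.mpr ⟨mem_relations.mpr ⟨fun t ↦ hfS t, ?_⟩,
    Fintype.mem_piFinset.mpr fun t ↦ hfS t⟩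
  have hrestrict : ∑ t : {t // μ t ≠ 0}, μ t • f t = ∑ t, μ t • f t := by
    rw [← Fintype.sum_subtype_add_sum_subtype (μ · ≠ 0) fun t ↦ μ t • f t, left_eq_add]
    exact sum_eq_zero fun t _ ↦ by rw [not_not.mp t.2, zero_smul]
  exact hrestrict ▸ hsum

lemma FewRelations.card_relations_le [Fintype F] {S : Finset V} {η : ℝ} {L l : ℕ}
    (hS : FewRelations F S η L) (hl : l ≤ L) (μ : Fin l → F) (hμ : 2 ≤ #{t : Fin l | μ t ≠ 0}) :
    (#(relations S μ) : ℝ) ≤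
      η * (#S : ℝ) ^ l * ∏ t, if μ t = 0 then (1 : ℝ) else (Fintype.card F : ℝ)⁻¹ := by
  have hsupp : Fintype.card {t // μ t ≠ 0} = #{t : Fin l | μ t ≠ 0} := Fintype.card_subtype _
  have hsupp_le : #{t : Fin l | μ t ≠ 0} ≤ l := (card_le_univ _).trans_eq (Fintype.card_fin l)
  have hfew := hS {t // μ t ≠ 0} (fun t ↦ μ t) (fun t ↦ t.2) (hsupp ▸ hμ)
    (hsupp ▸ hsupp_le.trans hl)
  have hrestrict := card_relations_le_restrict_support S μ
  rw [hsupp] at hfew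
  rw [hsupp, Fintype.card_fin] at hrestrict
  have hq : (0 : ℝ) < (Fintype.card F : ℝ) ^ #{t : Fin l | μ t ≠ 0} := by
    have : 0 < Fintype.card F := Fintype.card_pos
    positivity
  have hprod : ∏ t, (if μ t = 0 then (1 : ℝ) else (Fintype.card F : ℝ)⁻¹) =
      ((Fintype.card F : ℝ) ^ #{t : Fin l | μ t ≠ 0})⁻¹ := by
    rw [prod_ite, prod_const_one, one_mul, prod_const, inv_pow]
  rw [hprod, ← div_eq_mul_inv, le_div_iff₀ hq]
  calc (#(relations S μ) : ℝ) * (Fintype.card F : ℝ) ^ #{t : Fin l | μ t ≠ 0}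
      ≤ (#(relations S fun t : {t // μ t ≠ 0} ↦ μ t) * (#S : ℝ) ^ (l - #{t : Fin l | μ t ≠ 0})) *
          (Fintype.card F : ℝ) ^ #{t : Fin l | μ t ≠ 0} := by
        gcongr
        exact_mod_cast hrestrict
    _ = (Fintype.card F : ℝ) ^ #{t : Fin l | μ t ≠ 0} *
          #(relations S fun t : {t // μ t ≠ 0} ↦ μ t) *
          (#S : ℝ) ^ (l - #{t : Fin l | μ t ≠ 0}) := by ring
    _ ≤ η * (#S : ℝ) ^ #{t : Fin l | μ t ≠ 0} * (#S : ℝ) ^ (l - #{t : Fin l | μ t ≠ 0}) := by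
        gcongr
    _ = η * (#S : ℝ) ^ l := by rw [mul_assoc, ← pow_add, Nat.add_sub_cancel' hsupp_le]

lemma sum_prod_weights_le_two_pow [Fintype F] (l : ℕ) :
    ∑ μ : Fin l → F, ∏ t, (if μ t = 0 then (1 : ℝ) else (Fintype.card F : ℝ)⁻¹) ≤ 2 ^ l := by
  rw [← Fintype.sum_pow (fun x : F ↦ if x = 0 then (1 : ℝ) else (Fintype.card F : ℝ)⁻¹)]
  refine pow_le_pow_left₀ (sum_nonneg fun x _ ↦ by positivity) ?_ l
  have hq : (Fintype.card F : ℝ) ≠ 0 := Nat.cast_ne_zero.mpr Fintype.card_ne_zero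
  calc ∑ x : F, (if x = 0 then (1 : ℝ) else (Fintype.card F : ℝ)⁻¹)
      ≤ ∑ x : F, ((if x = 0 then (1 : ℝ) else 0) + (Fintype.card F : ℝ)⁻¹) := by
        gcongr with x
        split_ifs <;> simp
    _ = 2 := by
        rw [sum_add_distrib, sum_ite_eq' univ (0 : F), sum_const, card_univ, nsmul_eq_mul,
          mul_inv_cancel₀ hq, if_pos (mem_univ _)]
        norm_num

lemma exists_relation_of_mem_dependencies {S J : Finset V} {u : V} {l : ℕ} (h0 : (0 : V) ∉ S)
    (h1 : ∀ s ∈ S, ∀ c : F, c • s ∈ S → c = 1) (hJu : (J, u) ∈ dependencies F S l)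
    {f : Fin l → V} (hf : univ.image f = J) :
    ∃ μ : Fin l → F, 2 ≤ #{t : Fin l | μ t ≠ 0} ∧ f ∈ relations S μ ∧ ∑ t, μ t • f t = u := by
  obtain ⟨hJ, huS, huJ, huspan⟩ := mem_dependencies.mp hJu
  have hfJ : ∀ t, f t ∈ J := fun t ↦ hf ▸ mem_image_of_mem f (mem_univ t)
  have hfS : ∀ t, f t ∈ S := fun t ↦ (mem_indepSubsets.mp hJ).1 (hfJ t)
  rw [← hf, coe_image, coe_univ, Set.image_univ, Submodule.mem_span_range_iff_exists_fun]
    at huspan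
  obtain ⟨μ, hμ⟩ := huspan
  refine ⟨μ, ?_, mem_relations.mpr ⟨hfS, hμ ▸ huS⟩, hμ⟩
  by_contra! hsupp
  obtain ⟨t, ht⟩ | hzero : (∃ t, ∀ t', μ t' ≠ 0 → t' = t) ∨ ∀ t, μ t = 0 := by
    by_cases hne : ∃ t, μ t ≠ 0
    · obtain ⟨t, ht⟩ := hne
      refine .inl ⟨t, fun t' ht' ↦ ?_⟩
      exact card_le_one.mp (Nat.le_of_lt_succ hsupp) t' (by simpa using ht') t (by simpa using ht)
    · exact .inr fun t ↦ not_not.mp fun ht ↦ hne ⟨t, ht⟩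
  · rw [sum_eq_single t (fun t' _ hne ↦ by rw [not_not.mp (mt (ht t') hne), zero_smul])
      (fun h ↦ absurd (mem_univ t) h)] at hμ
    have hc := h1 (f t) (hfS t) (μ t) (hμ ▸ huS)
    rw [hc, one_smul] at hμ
    exact huJ (hμ ▸ hfJ t)
  · rw [sum_eq_zero fun t _ ↦ by rw [hzero t, zero_smul]] at hμ
    exact h0 (hμ ▸ huS)

lemma factorial_mul_card_dependencies_le_sum [Fintype F] {S : Finset V} (h0 : (0 : V) ∉ S)
    (h1 : ∀ s ∈ S, ∀ c : F, c • s ∈ S → c = 1) (l : ℕ) :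
    l.factorial * #(dependencies F S l) ≤
      ∑ μ : Fin l → F with 2 ≤ #{t : Fin l | μ t ≠ 0}, #(relations S μ) := by
  have henum : ∀ p ∈ dependencies F S l, ∃ f : Fin l → V,
      Function.Injective f ∧ univ.image f = p.1 := by
    intro p hp
    have hcard : Fintype.card p.1 = l :=
      (Fintype.card_coe _).trans (mem_indepSubsets.mp (mem_dependencies.mp hp).1).2.1
    let e := (Fintype.equivFinOfCardEq hcard).symm
    refine ⟨fun t ↦ e t, Subtype.val_injective.comp e.injective, ?_⟩
    rw [show (fun t ↦ (e t : V)) = Subtype.val ∘ e from rfl, ← image_image, image_univ_equiv,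
      univ_eq_attach, attach_image_val]
  have image_comp_equiv (f : Fin l → V) (σ : Equiv.Perm (Fin l)) :
      univ.image (f ∘ σ) = univ.image f := by
    rw [← image_image, image_univ_equiv]
  choose! enum henum_inj henum_image using henum
  have hrel : ∀ p ∈ dependencies F S l, ∀ σ : Equiv.Perm (Fin l), ∃ μ : Fin l → F,
      2 ≤ #{t : Fin l | μ t ≠ 0} ∧ enum p ∘ σ ∈ relations S μ ∧ ∑ t, μ t • (enum p ∘ σ) t = p.2 :=
    fun p hp σ ↦ exists_relation_of_mem_dependencies h0 h1 hp <| by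
      rw [image_comp_equiv, henum_image p hp]
  choose! coeff hsupp hcoeff hsum using hrel
  rw [← card_sigma, ← Fintype.card_fin l, ← Fintype.card_perm, Fintype.card_fin, ← card_univ,
    mul_comm, ← card_product]
  refine card_le_card_of_injOn (fun x ↦ ⟨coeff x.1 x.2, enum x.1 ∘ x.2⟩) (fun x hx ↦ ?_) ?_
  · have hp := (mem_product.mp (mem_coe.mp hx)).1
    exact mem_sigma.mpr ⟨mem_filter.mpr ⟨mem_univ _, hsupp _ hp _⟩, hcoeff _ hp _⟩
  · rintro ⟨p, σ⟩ hp ⟨p', σ'⟩ hp' heq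
    simp only [coe_product, Set.mem_prod, mem_coe] at hp hp'
    have hcoeff_eq : coeff p σ = coeff p' σ' := (Sigma.mk.inj heq).1
    have henum_eq : enum p ∘ σ = enum p' ∘ σ' := eq_of_heq (Sigma.mk.inj heq).2
    have hp_eq : p = p' := by
      refine Prod.ext ?_ ?_
      · rw [← henum_image p hp.1, ← henum_image p' hp'.1, ← image_comp_equiv (enum p) σ, henum_eq,
          image_comp_equiv]
      · rw [← hsum p hp.1 σ, ← hsum p' hp'.1 σ', hcoeff_eq, henum_eq]
    subst hp_eq
    rw [DFunLike.coe_injective ((henum_inj p hp.1).comp_left henum_eq)]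

lemma factorial_mul_card_dependencies_le [Fintype F] {S : Finset V} {η : ℝ} {L l : ℕ}
    (hS : FewRelations F S η L) (hl : l ≤ L) (hη : 0 ≤ η) (h0 : (0 : V) ∉ S)
    (h1 : ∀ s ∈ S, ∀ c : F, c • s ∈ S → c = 1) :
    (l.factorial : ℝ) * #(dependencies F S l) ≤ 2 ^ l * η * (#S : ℝ) ^ l := by
  calc (l.factorial : ℝ) * #(dependencies F S l)
      ≤ ∑ μ : Fin l → F with 2 ≤ #{t : Fin l | μ t ≠ 0}, (#(relations S μ) : ℝ) :=
        mod_cast factorial_mul_card_dependencies_le_sum h0 h1 l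
    _ ≤ ∑ μ : Fin l → F with 2 ≤ #{t : Fin l | μ t ≠ 0},
          η * (#S : ℝ) ^ l * ∏ t, (if μ t = 0 then (1 : ℝ) else (Fintype.card F : ℝ)⁻¹) :=
        sum_le_sum fun μ hμ ↦ hS.card_relations_le hl μ (mem_filter.mp hμ).2
    _ ≤ ∑ μ : Fin l → F,
          η * (#S : ℝ) ^ l * ∏ t, (if μ t = 0 then (1 : ℝ) else (Fintype.card F : ℝ)⁻¹) :=
        sum_le_univ_sum_of_nonneg fun μ ↦ by positivity
    _ ≤ η * (#S : ℝ) ^ l * 2 ^ l := by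
        rw [← mul_sum]
        gcongr
        exact sum_prod_weights_le_two_pow l
    _ = 2 ^ l * η * (#S : ℝ) ^ l := by ring

lemma indepSubsets_zero (S : Finset V) : indepSubsets F S 0 = {∅} := by
  rw [indepSubsets, powersetCard_zero, filter_true_of_mem]
  intro J hJ
  rw [mem_singleton.mp hJ, coe_empty]
  exact linearIndepOn_empty F id

lemma sum_card_indep_extensions_le (S : Finset V) (h : ℕ) :
    ∑ J ∈ indepSubsets F S h, #{u ∈ S | u ∉ J ∧ insert u J ∈ indepSubsets F S (h + 1)} ≤
      (h + 1) * #(indepSubsets F S (h + 1)) := by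
  calc ∑ J ∈ indepSubsets F S h, #{u ∈ S | u ∉ J ∧ insert u J ∈ indepSubsets F S (h + 1)}
      ≤ ∑ J ∈ indepSubsets F S h, #{K ∈ indepSubsets F S (h + 1) | J ⊆ K} := by
        refine sum_le_sum fun J _ ↦ card_le_card_of_injOn (insert · J) (fun u hu ↦ ?_) ?_
        · exact mem_filter.mpr ⟨(mem_filter.mp hu).2.2, subset_insert u J⟩
        · exact fun u hu _ _ huu' ↦ (insert_inj (mem_filter.mp hu).2.1).mp huu'
    _ = ∑ K ∈ indepSubsets F S (h + 1), #{J ∈ indepSubsets F S h | J ⊆ K} :=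
        sum_card_bipartiteAbove_eq_sum_card_bipartiteBelow _
    _ ≤ #(indepSubsets F S (h + 1)) • (h + 1) := by
        refine sum_le_card_nsmul _ _ _ fun K hK ↦ ?_
        calc #{J ∈ indepSubsets F S h | J ⊆ K} ≤ #(K.powersetCard h) := by
              refine card_le_card fun J hJ ↦ ?_
              obtain ⟨hJ, hJK⟩ := mem_filter.mp hJ
              exact mem_powersetCard.mpr ⟨hJK, (mem_indepSubsets.mp hJ).2.1⟩
          _ = h + 1 := by
              rw [card_powersetCard, (mem_indepSubsets.mp hK).2.1, Nat.choose_succ_self_right]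
    _ = (h + 1) * #(indepSubsets F S (h + 1)) := by rw [smul_eq_mul, mul_comm]

lemma card_mul_card_indepSubsets_le (S : Finset V) (h : ℕ) :
    #S * #(indepSubsets F S h) ≤ h * #(indepSubsets F S h) + #(dependencies F S h) +
      (h + 1) * #(indepSubsets F S (h + 1)) := by
  have hsplit : ∀ J ∈ indepSubsets F S h, #S ≤ h + #{u ∈ S | (J, u) ∈ dependencies F S h} +
      #{u ∈ S | u ∉ J ∧ insert u J ∈ indepSubsets F S (h + 1)} := by
    intro J hJ
    obtain ⟨hJS, hJh, hJ_indep⟩ := mem_indepSubsets.mp hJ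
    nth_rw 1 [← hJh]
    refine (card_le_card fun u hu ↦ ?_).trans
      ((card_union_le _ _).trans (Nat.add_le_add_right (card_union_le J _) _))
    by_cases huJ : u ∈ J
    · exact mem_union_left _ (mem_union_left _ huJ)
    by_cases huspan : u ∈ Submodule.span F (J : Set V)
    · exact mem_union_left _ (mem_union_right _
        (mem_filter.mpr ⟨hu, mem_dependencies.mpr ⟨hJ, hu, huJ, huspan⟩⟩))
    · refine mem_union_right _ (mem_filter.mpr ⟨hu, huJ, mem_indepSubsets.mpr
        ⟨insert_subset hu hJS, by rw [card_insert_of_notMem huJ, hJh], ?_⟩⟩)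
      rw [coe_insert]
      exact hJ_indep.insert (by rwa [Set.image_id])
  have hdep : ∑ J ∈ indepSubsets F S h, #{u ∈ S | (J, u) ∈ dependencies F S h} =
      #(dependencies F S h) := by
    rw [← card_sigma]
    refine card_nbij' (fun x ↦ (x.1, x.2)) (fun p ↦ ⟨p.1, p.2⟩) ?_ ?_ (fun _ _ ↦ rfl)
      fun _ _ ↦ rfl
    · exact fun x hx ↦ (mem_filter.mp (mem_sigma.mp hx).2).2
    · exact fun p hp ↦ mem_sigma.mpr ⟨(mem_dependencies.mp hp).1,
        mem_filter.mpr ⟨(mem_dependencies.mp hp).2.1, hp⟩⟩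
  calc #S * #(indepSubsets F S h) = ∑ _J ∈ indepSubsets F S h, #S := by
        rw [sum_const, smul_eq_mul, mul_comm]
    _ ≤ _ := sum_le_sum hsplit
    _ ≤ _ := by
        rw [sum_add_distrib, sum_add_distrib, sum_const, smul_eq_mul, hdep, mul_comm _ h]
        exact Nat.add_le_add_left (sum_card_indep_extensions_le S h) _

lemma factorial_mul_card_indepSubsets_le (S : Finset V) (h : ℕ) :
    (h.factorial : ℝ) * #(indepSubsets F S h) ≤ (#S : ℝ) ^ h := by
  have hcard : #(indepSubsets F S h) ≤ (#S).choose h :=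
    (card_filter_le _ _).trans_eq (card_powersetCard h S)
  calc (h.factorial : ℝ) * #(indepSubsets F S h) ≤ h.factorial * (#S).choose h := by gcongr
    _ ≤ h.factorial * ((#S : ℝ) ^ h / h.factorial) := by gcongr; exact Nat.choose_le_pow_div h #S
    _ = (#S : ℝ) ^ h := mul_div_cancel₀ _ (Nat.cast_ne_zero.mpr h.factorial_ne_zero)

lemma le_factorial_mul_card_indepSubsets {S : Finset V} {η : ℝ} {H : ℕ} (hη : 0 ≤ η)
    (hS : S.Nonempty)
    (hdep : ∀ l ≤ H, (l.factorial : ℝ) * #(dependencies F S l) ≤ 2 ^ l * η * (#S : ℝ) ^ l)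
    {h : ℕ} (hh : h ≤ H) :
    (#S : ℝ) ^ h * (1 - h * (H + 2 ^ H * η) / #S) ≤ h.factorial * #(indepSubsets F S h) := by
  have hS' : (#S : ℝ) ≠ 0 := Nat.cast_ne_zero.mpr hS.card_ne_zero
  induction h with
  | zero => simp [indepSubsets_zero]
  | succ h ih =>
    have ih := ih (by lia)
    have hhH : (h : ℝ) ≤ H := Nat.cast_le.mpr (by lia)
    have hrec : (#S : ℝ) * #(indepSubsets F S h) ≤ h * #(indepSubsets F S h) +
        #(dependencies F S h) + (h + 1) * #(indepSubsets F S (h + 1)) :=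
      mod_cast card_mul_card_indepSubsets_le S h
    have hmain : (h : ℝ) * (h.factorial * #(indepSubsets F S h)) ≤ H * (#S : ℝ) ^ h := by
      gcongr
      exact factorial_mul_card_indepSubsets_le S h
    have herror : (h.factorial : ℝ) * #(dependencies F S h) ≤ 2 ^ H * η * (#S : ℝ) ^ h := by
      refine (hdep h (by lia)).trans ?_
      gcongr
      · norm_num
      · lia
    calc (#S : ℝ) ^ (h + 1) * (1 - ((h + 1 : ℕ) : ℝ) * (H + 2 ^ H * η) / #S)
        = #S * ((#S : ℝ) ^ h * (1 - h * (H + 2 ^ H * η) / #S)) - H * (#S : ℝ) ^ h -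
            2 ^ H * η * (#S : ℝ) ^ h := by
          push_cast
          field_simp [hS']
          ring
      _ ≤ #S * (h.factorial * #(indepSubsets F S h)) -
            h * (h.factorial * #(indepSubsets F S h)) - h.factorial * #(dependencies F S h) := by
          gcongr
      _ = h.factorial * (#S * #(indepSubsets F S h) - h * #(indepSubsets F S h) -
            #(dependencies F S h)) := by ring
      _ ≤ h.factorial * ((h + 1) * #(indepSubsets F S (h + 1))) := by
          gcongr
          linarith
      _ = (h + 1).factorial * #(indepSubsets F S (h + 1)) := by
          rw [Nat.factorial_succ]
          push_cast
          ring

lemma neg_one_pow_mul_le {a b ε : ℝ} (hab : a ≤ b) (hba : b * (1 - ε) ≤ a) (hbε : 0 ≤ b * ε)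
    (h : ℕ) : (-1) ^ h * a ≤ (-1) ^ h * b + b * ε := by
  rcases neg_one_pow_eq_or ℝ h with hs | hs <;> rw [hs] <;> linarith [hbε]

lemma card_nonvanishing_le_sum [Fintype G] [Fintype (V →ₗ[F] G)] (S : Finset V) {H : ℕ}
    (hH : Even H) :
    (#{L : V →ₗ[F] G | ∀ s ∈ S, L s ≠ 0} : ℝ) ≤ Fintype.card (V →ₗ[F] G) *
      (∑ h ∈ range (H + 1), (-1 : ℝ) ^ h * (#(indepSubsets F S h) / (Fintype.card G : ℝ) ^ h) +
        ∑ l ∈ range (2 * H + 1),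
          (2 : ℝ) ^ l * (#(dependencies F S l) / (Fintype.card G : ℝ) ^ l)) := by
  have hG (h : ℕ) : (Fintype.card G : ℝ) ^ h ≠ 0 :=
    pow_ne_zero h (Nat.cast_ne_zero.mpr Fintype.card_ne_zero)
  have hindep (h : ℕ) : ∑ L : V →ₗ[F] G, (#(indepSubsets F {s ∈ S | L s = 0} h) : ℝ) =
      Fintype.card (V →ₗ[F] G) * (#(indepSubsets F S h) / (Fintype.card G : ℝ) ^ h) := by
    rw [← mul_div_assoc, eq_div_iff (hG h), mul_comm (Fintype.card _ : ℝ)]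
    exact_mod_cast sum_card_indepSubsets_mul S h
  have hdep (l : ℕ) : ∑ L : V →ₗ[F] G, (#(dependencies F {s ∈ S | L s = 0} l) : ℝ) =
      Fintype.card (V →ₗ[F] G) * (#(dependencies F S l) / (Fintype.card G : ℝ) ^ l) := by
    rw [← mul_div_assoc, eq_div_iff (hG l), mul_comm (Fintype.card _ : ℝ)]
    exact_mod_cast sum_card_dependencies_mul S l
  calc (#{L : V →ₗ[F] G | ∀ s ∈ S, L s ≠ 0} : ℝ)
      = ∑ L : V →ₗ[F] G, if ({s ∈ S | L s = 0} : Finset V) = ∅ then (1 : ℝ) else 0 := by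
        simp only [sum_boole, filter_eq_empty_iff, ne_eq]
    _ ≤ ∑ L : V →ₗ[F] G,
          (∑ h ∈ range (H + 1), (-1 : ℝ) ^ h * #(indepSubsets F {s ∈ S | L s = 0} h) +
            ∑ l ∈ range (2 * H + 1), (2 : ℝ) ^ l * #(dependencies F {s ∈ S | L s = 0} l)) :=
        sum_le_sum fun L _ ↦ indicator_empty_le_bonferroni _ hH
    _ = _ := by
        rw [sum_add_distrib, sum_comm, sum_comm (s := univ) (t := range (2 * H + 1)), mul_add]
        simp only [← mul_sum, hindep, hdep, mul_left_comm _ (Fintype.card (V →ₗ[F] G) : ℝ)]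

lemma pow_eq_pow_div_pow_of_eq_mul {lam g s : ℝ} (hg : 0 < g) (hs : s = lam * g) (h : ℕ) :
    lam ^ h = s ^ h / g ^ h := by
  rw [hs, mul_pow, mul_div_cancel_right₀ _ (pow_ne_zero h hg.ne')]

lemma alternating_card_indepSubsets_le {S : Finset V} {η lam g : ℝ} {H : ℕ} (hη : 0 ≤ η)
    (hlam : 0 < lam) (hg : 0 < g) (hS : (#S : ℝ) = lam * g)
    (hdep : ∀ l ≤ H, (l.factorial : ℝ) * #(dependencies F S l) ≤ 2 ^ l * η * (#S : ℝ) ^ l)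
    {h : ℕ} (hh : h ≤ H) :
    (-1 : ℝ) ^ h * (#(indepSubsets F S h) / g ^ h) ≤
      (-lam) ^ h / h.factorial + lam ^ h / h.factorial * (H * (H + 2 ^ H * η) / #S) := by
  have hfact : (0 : ℝ) < h.factorial := Nat.cast_pos.mpr h.factorial_pos
  have hS_pos : (0 : ℝ) < #S := hS ▸ mul_pos hlam hg
  rw [neg_pow lam, mul_div_assoc]
  refine neg_one_pow_mul_le ?_ ?_ (by positivity) h
  · rw [pow_eq_pow_div_pow_of_eq_mul hg hS, div_right_comm]
    gcongr
    exact (le_div_iff₀' hfact).mpr (factorial_mul_card_indepSubsets_le S h)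
  · rw [pow_eq_pow_div_pow_of_eq_mul hg hS, div_right_comm, div_mul_eq_mul_div]
    gcongr
    rw [div_mul_eq_mul_div, div_le_iff₀' hfact]
    refine le_trans ?_ (le_factorial_mul_card_indepSubsets hη
      (card_pos.mp (Nat.cast_pos.mp hS_pos)) hdep hh)
    gcongr

lemma two_pow_mul_card_dependencies_le {S : Finset V} {η lam g : ℝ} (hg : 0 < g)
    (hS : (#S : ℝ) = lam * g) {l : ℕ}
    (hdep : (l.factorial : ℝ) * #(dependencies F S l) ≤ 2 ^ l * η * (#S : ℝ) ^ l) :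
    (2 : ℝ) ^ l * (#(dependencies F S l) / g ^ l) ≤ η * ((4 * lam) ^ l / l.factorial) := by
  have hfact : (0 : ℝ) < l.factorial := Nat.cast_pos.mpr l.factorial_pos
  calc (2 : ℝ) ^ l * (#(dependencies F S l) / g ^ l)
      ≤ 2 ^ l * ((2 ^ l * η * (#S : ℝ) ^ l / l.factorial) / g ^ l) := by
        gcongr
        exact (le_div_iff₀' hfact).mpr hdep
    _ = η * ((4 * lam) ^ l / l.factorial) := by
        rw [mul_pow 4, pow_eq_pow_div_pow_of_eq_mul hg hS, show (4 : ℝ) = 2 * 2 by norm_num,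
          mul_pow]
        ring

lemma card_nonvanishing_le [Fintype F] [Fintype G] [Fintype (V →ₗ[F] G)] {S : Finset V}
    {η lam : ℝ} {H : ℕ} (hη : 0 ≤ η) (hH : Even H) (hlam : 0 < lam)
    (hS_rel : FewRelations F S η (2 * H)) (hS : (#S : ℝ) = lam * Fintype.card G)
    (h0 : (0 : V) ∉ S) (h1 : ∀ s ∈ S, ∀ c : F, c • s ∈ S → c = 1) :
    (#{L : V →ₗ[F] G | ∀ s ∈ S, L s ≠ 0} : ℝ) ≤ Fintype.card (V →ₗ[F] G) *
      (∑ h ∈ range (H + 1), (-lam) ^ h / h.factorial +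
        Real.exp lam * (H * (H + 2 ^ H * η) / #S) + η * Real.exp (4 * lam)) := by
  have hG : (0 : ℝ) < Fintype.card G := Nat.cast_pos.mpr Fintype.card_pos
  have hdep : ∀ l ≤ 2 * H, (l.factorial : ℝ) * #(dependencies F S l) ≤ 2 ^ l * η * (#S : ℝ) ^ l :=
    fun l hl ↦ factorial_mul_card_dependencies_le hS_rel hl hη h0 h1
  refine (card_nonvanishing_le_sum S hH).trans (mul_le_mul_of_nonneg_left ?_ (by positivity))
  refine (add_le_add
    (sum_le_sum fun h hh ↦ alternating_card_indepSubsets_le hη hlam hG hS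
      (fun l hl ↦ hdep l (by lia)) (mem_range_succ_iff.mp hh))
    (sum_le_sum fun l hl ↦ two_pow_mul_card_dependencies_le hG hS
      (hdep l (mem_range_succ_iff.mp hl)))).trans ?_
  rw [sum_add_distrib, ← sum_mul, ← mul_sum]
  gcongr
  · exact Real.sum_le_exp_of_nonneg hlam.le _
  · exact Real.sum_le_exp_of_nonneg (by positivity) _

lemma alternating_exp_sum_le (v : ℕ) :
    ∑ h ∈ range (4 * v + 1), (-(v : ℝ)) ^ h / h.factorial ≤ 2 * Real.exp (-v) := by
  have hexp (x : ℝ) : HasSum (fun h : ℕ ↦ x ^ h / h.factorial) (Real.exp x) := by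
    rw [Real.exp_eq_exp_ℝ]
    exact NormedSpace.expSeries_div_hasSum_exp x
  have htail := (hasSum_nat_add_iff' (4 * v + 1)).mpr (hexp (-v))
  have hmajorant := (hasSum_nat_add_iff' (4 * v + 1)).mpr
    ((hexp (4 * v)).mul_left ((1 / 4 : ℝ) ^ (4 * v)))
  have hterm (h : ℕ) :
      -((-(v : ℝ)) ^ (h + (4 * v + 1)) / (h + (4 * v + 1)).factorial) ≤
        (1 / 4 : ℝ) ^ (4 * v) *
          ((4 * v : ℝ) ^ (h + (4 * v + 1)) / (h + (4 * v + 1)).factorial) := by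
    rw [← mul_div_assoc, ← neg_div]
    gcongr
    calc -(-(v : ℝ)) ^ (h + (4 * v + 1)) ≤ |(-(v : ℝ)) ^ (h + (4 * v + 1))| := neg_le_abs _
      _ = (1 / 4 : ℝ) ^ (h + (4 * v + 1)) * (4 * v : ℝ) ^ (h + (4 * v + 1)) := by
        rw [abs_pow, abs_neg, Nat.abs_cast, ← mul_pow]
        ring
      _ ≤ (1 / 4 : ℝ) ^ (4 * v) * (4 * v : ℝ) ^ (h + (4 * v + 1)) := by
        gcongr ?_ * _
        exact pow_le_pow_of_le_one (by norm_num) (by norm_num) (by lia)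
  have hcompare := hasSum_le hterm htail.neg hmajorant
  have hdropped : 0 ≤ ∑ i ∈ range (4 * v + 1),
      (1 / 4 : ℝ) ^ (4 * v) * ((4 * v : ℝ) ^ i / i.factorial) := by positivity
  have hsmall : (1 / 4 : ℝ) ^ (4 * v) * Real.exp (4 * v) ≤ Real.exp (-v) := by
    have hexp_five : Real.exp 5 ≤ 256 :=
      calc Real.exp 5 = Real.exp 1 ^ 5 := by rw [← Real.exp_nat_mul]; norm_num
        _ ≤ 3 ^ 5 := by gcongr; exact Real.exp_one_lt_three.le
        _ ≤ 256 := by norm_num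
    calc (1 / 4 : ℝ) ^ (4 * v) * Real.exp (4 * v)
        = (Real.exp 5 / 256) ^ v * Real.exp (-v) := by
          rw [pow_mul, div_pow _ _ v, ← Real.exp_nat_mul, div_mul_eq_mul_div, ← Real.exp_add,
            show (v * 5 + -v : ℝ) = 4 * v by ring, show ((1 / 4) ^ 4 : ℝ) = 1 / 256 by norm_num,
            one_div_pow, one_div_mul_eq_div]
      _ ≤ 1 * Real.exp (-v) := by
          gcongr
          exact pow_le_one₀ (by positivity) ((div_le_one (by norm_num)).mpr hexp_five)
      _ = Real.exp (-v) := one_mul _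
  linarith

lemma FewRelations.affineLift [Fintype F] {S : Finset V} {η : ℝ} {L : ℕ}
    (hS : FewRelations F S η L) : FewRelations F (({1} : Finset F) ×ˢ S) η L := by
  intro κ _ μ hμ h2 hL
  rw [card_product, card_singleton, one_mul]
  refine le_trans ?_ (hS κ μ hμ h2 hL)
  gcongr
  refine card_le_card_of_injOn (fun f t ↦ (f t).2) (fun f hf ↦ ?_) fun f hf f' hf' heq ↦ ?_
  · obtain ⟨hfS, hsum⟩ := mem_relations.mp (mem_coe.mp hf)
    refine mem_relations.mpr ⟨fun t ↦ (mem_product.mp (hfS t)).2, ?_⟩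
    simpa only [Prod.snd_sum, Prod.smul_snd] using (mem_product.mp hsum).2
  · have hfst {f : κ → F × V} (hf : f ∈ relations (({1} : Finset F) ×ˢ S) μ) (t : κ) :
        (f t).1 = 1 := mem_singleton.mp (mem_product.mp ((mem_relations.mp hf).1 t)).1
    exact funext fun t ↦ Prod.ext ((hfst hf t).trans (hfst hf' t).symm) (congrFun heq t)

lemma sum_card_missed_eq [Fintype G] [Fintype (V →ₗ[F] G)] [Fintype (F × V →ₗ[F] G)]
    (S : Finset V) :
    ∑ W : V →ₗ[F] G, #{y | ∀ s ∈ S, W s ≠ y} =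
      #{L : F × V →ₗ[F] G | ∀ p ∈ ({1} : Finset F) ×ˢ S, L p ≠ 0} := by
  rw [← card_sigma]
  refine card_bij'
    (fun x _ ↦ (LinearMap.toSpanSingleton F G (-x.2)).coprod x.1)
    (fun L _ ↦ ⟨L ∘ₗ LinearMap.inr F F V, -L (1, 0)⟩) (fun x hx ↦ ?_) (fun L hL ↦ ?_)
    (fun x _ ↦ ?_) fun L _ ↦ ?_
  · refine mem_filter.mpr ⟨mem_univ _, fun p hp h ↦ ?_⟩
    obtain ⟨h1, hs⟩ := mem_product.mp hp
    refine (mem_filter.mp (mem_sigma.mp hx).2).2 p.2 hs ?_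
    exact (neg_add_eq_zero.mp (by simpa [mem_singleton.mp h1] using h)).symm
  · refine mem_sigma.mpr ⟨mem_univ _, mem_filter.mpr ⟨mem_univ _, fun s hs h ↦ ?_⟩⟩
    refine (mem_filter.mp hL).2 (1, s) (mk_mem_product (mem_singleton_self 1) hs) ?_
    rw [← zero_add (1 : F), ← add_zero s, ← Prod.mk_add_mk, map_add]
    exact eq_neg_iff_add_eq_zero.mp h
  · ext <;> simp
  · ext <;> simp

lemma card_linearMap_prod [Fintype G] [Fintype (V →ₗ[F] G)] [Fintype (F × V →ₗ[F] G)] :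
    Fintype.card (F × V →ₗ[F] G) = Fintype.card (V →ₗ[F] G) * Fintype.card G := by
  simp only [← Nat.card_eq_fintype_card]
  rw [← Nat.card_congr (LinearMap.coprodEquiv F (M := F) (M₂ := V) (M₃ := G)).toEquiv,
    Nat.card_prod, Nat.card_congr (LinearMap.ringLmapEquivSelf F F G).toEquiv, mul_comm]

lemma bonferroni_error_le {v : ℕ} {η g : ℝ} (hv : 0 < v) (hη : 0 ≤ η)
    (hη_le : η ≤ Real.exp (-(5 * v))) (hg : 20 * v * Real.exp (2 * v) ≤ g) :
    ∑ h ∈ range (4 * v + 1), (-(v : ℝ)) ^ h / h.factorial +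
      Real.exp v * ((4 * v : ℕ) * ((4 * v : ℕ) + 2 ^ (4 * v) * η) / (v * g)) +
        η * Real.exp (4 * v) ≤ 4 * Real.exp (-v) := by
  have hv1 : (1 : ℝ) ≤ v := Nat.one_le_cast.mpr hv
  have hlast : η * Real.exp (4 * v) ≤ Real.exp (-v) := by
    calc η * Real.exp (4 * v) ≤ Real.exp (-(5 * v)) * Real.exp (4 * v) := by gcongr
      _ = Real.exp (-v) := by rw [← Real.exp_add]; ring_nf
  have hpow : (2 : ℝ) ^ (4 * v) * η ≤ 1 := by
    calc (2 : ℝ) ^ (4 * v) * η ≤ Real.exp 1 ^ (4 * v) * Real.exp (-(5 * v)) := by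
          gcongr
          exact Real.exp_one_gt_two.le
      _ = Real.exp (-v) := by
          rw [← Real.exp_nat_mul, ← Real.exp_add]
          push_cast
          ring_nf
      _ ≤ 1 := Real.exp_le_one_iff.mpr (by linarith)
  have hmiddle : Real.exp v * ((4 * v : ℕ) * ((4 * v : ℕ) + 2 ^ (4 * v) * η) / (v * g)) ≤
      Real.exp (-v) := by
    push_cast
    calc Real.exp v * (4 * v * (4 * v + 2 ^ (4 * v) * η) / (v * g))
        ≤ Real.exp v * (4 * v * (4 * v + v) / (v * (20 * v * Real.exp (2 * v)))) := by
          gcongr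
          exact hpow.trans hv1
      _ = Real.exp v * Real.exp (-(2 * v)) := by
          rw [Real.exp_neg]
          field_simp
          norm_num
      _ = Real.exp (-v) := by rw [← Real.exp_add]; ring_nf
  linarith [alternating_exp_sum_le v]

lemma exists_linearMap_card_missed_le [Fintype F] [Finite V] [Fintype G] {S : Finset V} {η : ℝ}
    {v : ℕ} (hv : 0 < v) (hη : 0 ≤ η) (hη_le : η ≤ Real.exp (-(5 * v)))
    (hG : 20 * v * Real.exp (2 * v) ≤ Fintype.card G) (hS_rel : FewRelations F S η (8 * v))
    (hS : #S = v * Fintype.card G) :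
    ∃ W : V →ₗ[F] G, (#{y | ∀ s ∈ S, W s ≠ y} : ℝ) ≤ 4 * Real.exp (-v) * Fintype.card G := by
  have := @Fintype.ofFinite (V →ₗ[F] G) (DFunLike.finite _)
  have := @Fintype.ofFinite (F × V →ₗ[F] G) (DFunLike.finite _)
  have hlift_card : (#(({1} : Finset F) ×ˢ S) : ℝ) = v * Fintype.card G := by
    rw [card_product, card_singleton, one_mul, hS, Nat.cast_mul]
  have hrel : FewRelations F (({1} : Finset F) ×ˢ S) η (2 * (4 * v)) := by
    rw [show 2 * (4 * v) = 8 * v by ring]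
    exact hS_rel.affineLift
  have hbound := card_nonvanishing_le (G := G) hη ⟨2 * v, by ring⟩ (Nat.cast_pos.mpr hv) hrel
    hlift_card (by simp) fun s hs c hc ↦ by
      obtain ⟨h1, -⟩ := mem_product.mp hs
      obtain ⟨hc1, -⟩ := mem_product.mp hc
      simpa [mem_singleton.mp h1] using hc1
  rw [← sum_card_missed_eq, card_linearMap_prod, hlift_card] at hbound
  have hsum : ∑ W : V →ₗ[F] G, (#{y | ∀ s ∈ S, W s ≠ y} : ℝ) ≤
      ∑ _W : V →ₗ[F] G, 4 * Real.exp (-v) * Fintype.card G := by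
    rw [Nat.cast_sum, Nat.cast_mul, mul_assoc] at hbound
    rw [sum_const, card_univ, nsmul_eq_mul, mul_comm (4 * _)]
    refine hbound.trans ?_
    gcongr
    exact bonferroni_error_le hv hη hη_le hG
  obtain ⟨W, -, hW⟩ := exists_le_of_sum_le univ_nonempty hsum
  exact ⟨W, hW⟩

end RandomLinearMaps

/-! ### Rhombic patches of the hexagonal lattice -/

section Overlap

open Finset

variable {G : Type*} [AddCommGroup G] [DecidableEq G]

/-- The overlap `U ∩ (U + e)` of a set with its translate by `e`. -/
def translateOverlap (U : Finset G) (e : G) : Finset G := {g ∈ U | g - e ∈ U}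

variable [Fintype G]

lemma sum_card_translateOverlap (U : Finset G) : ∑ e, #(translateOverlap U e) = #U ^ 2 := by
  have card_translates (g : G) : #{e | g - e ∈ U} = #U :=
    card_bij (fun e _ ↦ g - e) (by simp) (fun _ _ _ _ h ↦ sub_right_injective h)
      fun b hb ↦ ⟨g - b, by simpa using hb, by simp⟩
  calc ∑ e, #(translateOverlap U e) = ∑ g ∈ U, #{e | g - e ∈ U} :=
        (sum_card_bipartiteAbove_eq_sum_card_bipartiteBelow fun g e ↦ g - e ∈ U).symm
    _ = #U ^ 2 := by simp only [card_translates, sum_const, smul_eq_mul, sq]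

lemma card_large_translateOverlap_mul_le {U : Finset G} {ε K : ℝ} (hε : 0 < ε)
    (hU : (#U : ℝ) ≤ ε * Fintype.card G) :
    (#{e | K * ε ^ 2 * Fintype.card G < #(translateOverlap U e)} : ℝ) * K ≤ Fintype.card G := by
  have hG : (0 : ℝ) < Fintype.card G := by exact_mod_cast Fintype.card_pos
  refine le_of_mul_le_mul_right ?_ (mul_pos (pow_pos hε 2) hG)
  set B : Finset G := {e | K * ε ^ 2 * Fintype.card G < #(translateOverlap U e)} with hB
  calc (#B : ℝ) * K * (ε ^ 2 * Fintype.card G) = #B • (K * ε ^ 2 * Fintype.card G) := by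
        rw [nsmul_eq_mul]; ring
    _ ≤ ∑ e ∈ B, (#(translateOverlap U e) : ℝ) :=
        card_nsmul_le_sum _ _ _ fun e he ↦ (mem_filter.1 he).2.le
    _ ≤ ∑ e, (#(translateOverlap U e) : ℝ) :=
        sum_le_sum_of_subset_of_nonneg (subset_univ _) fun _ _ _ ↦ by positivity
    _ = (#U : ℝ) ^ 2 := by exact_mod_cast sum_card_translateOverlap U
    _ ≤ (ε * Fintype.card G) ^ 2 := by gcongr
    _ = Fintype.card G * (ε ^ 2 * Fintype.card G) := by ring

lemma card_large_double_translateOverlap_mul_le {U : Finset G} {ε K : ℝ} (hε : 0 < ε) (hK : 0 < K)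
    (hU : (#U : ℝ) ≤ ε * Fintype.card G) :
    (#{p : G × G | K ^ 3 * ε ^ 4 * Fintype.card G <
        #(translateOverlap (translateOverlap U p.1) p.2)} : ℝ) * K ≤
      2 * (Fintype.card G : ℝ) ^ 2 := by
  set g := (Fintype.card G : ℝ) with hg
  have fiberwise : (#{p : G × G | K ^ 3 * ε ^ 4 * g <
        #(translateOverlap (translateOverlap U p.1) p.2)} : ℝ) =
      ∑ a, (#{b | K ^ 3 * ε ^ 4 * g < #(translateOverlap (translateOverlap U a) b)} : ℝ) := by
    simp only [← sum_boole, Fintype.sum_prod_type]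
  have fiber_le (a : G) :
      (#{b | K ^ 3 * ε ^ 4 * g < #(translateOverlap (translateOverlap U a) b)} : ℝ) * K ≤
        (if K * ε ^ 2 * g < #(translateOverlap U a) then K * g else 0) + g := by
    split_ifs with ha
    · rw [mul_comm K g]
      have : (#{b | K ^ 3 * ε ^ 4 * g < #(translateOverlap (translateOverlap U a) b)} : ℝ) ≤ g := by
        rw [hg, ← card_univ]
        exact_mod_cast card_filter_le _ _
      exact (mul_le_mul_of_nonneg_right this hK.le).trans (le_add_of_nonneg_right (by positivity))
    · have := card_large_translateOverlap_mul_le (K := K) (by positivity) (not_lt.1 ha)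
      rw [show K * (K * ε ^ 2) ^ 2 = K ^ 3 * ε ^ 4 by ring] at this
      rwa [zero_add]
  calc _ ≤ ∑ a, ((if K * ε ^ 2 * g < #(translateOverlap U a) then K * g else 0) + g) := by
        rw [fiberwise, sum_mul]
        exact sum_le_sum fun a _ ↦ fiber_le a
    _ = #{a | K * ε ^ 2 * g < #(translateOverlap U a)} * K * g + g * g := by
        rw [sum_add_distrib, ← sum_filter, sum_const, sum_const, nsmul_eq_mul, nsmul_eq_mul,
          card_univ, ← hg]
        ring
    _ ≤ g * g + g * g := by
        gcongr
        exact card_large_translateOverlap_mul_le hε hU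
    _ = 2 * g ^ 2 := by ring

end Overlap

section Rhombus

open Finset

/-- First edge of the three types of unit rhombi of the hexagonal lattice, in a basis
`(b₁, b₂)` of that lattice with `|b₁| = |b₂| = |b₁ - b₂|`. -/
def rhombusEdge₁ : Fin 3 → ℤ × ℤ := ![(1, 0), (1, 0), (0, 1)]

/-- Second edge of the three types of unit rhombi of the hexagonal lattice. -/
def rhombusEdge₂ : Fin 3 → ℤ × ℤ := ![(0, 1), (-1, 1), (1, -1)]

/-- The vertices of the unit rhombus of type `t` based at the origin. -/
def rhombus (t : Fin 3) : Finset (ℤ × ℤ) :=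
  {0, rhombusEdge₁ t, rhombusEdge₂ t, rhombusEdge₁ t + rhombusEdge₂ t}

lemma edge_sum_sub_mem_rhombus {t : Fin 3} {e : ℤ × ℤ} (he : e ∈ rhombus t) :
    rhombusEdge₁ t + rhombusEdge₂ t - e ∈ rhombus t := by
  simp only [rhombus, mem_insert, mem_singleton] at he ⊢
  rcases he with rfl | rfl | rfl | rfl <;> simp

variable {G : Type*} [AddCommGroup G]

/-- The homomorphism `ℤ² → G` sending the standard basis to the pair `p`. -/
def zsmulPair (p : G × G) : ℤ × ℤ →+ G where
  toFun z := z.1 • p.1 + z.2 • p.2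
  map_zero' := by simp
  map_add' z w := by simp only [Prod.fst_add, Prod.snd_add, add_smul]; abel

lemma zsmulPair_apply (p : G × G) (z : ℤ × ℤ) : zsmulPair p z = z.1 • p.1 + z.2 • p.2 := rfl

lemma zsmulPair_rhombusEdge_injective (t : Fin 3) :
    Function.Injective fun p : G × G ↦
      (zsmulPair p (rhombusEdge₁ t), zsmulPair p (rhombusEdge₂ t)) := by
  rintro ⟨a, b⟩ ⟨a', b'⟩ h
  fin_cases t <;> simp [zsmulPair_apply, rhombusEdge₁, rhombusEdge₂] at h ⊢ <;> grind

variable [DecidableEq G]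

/-- The points `g` such that the image under `zsmulPair p` of the rhombus of type `t`,
reflected and translated to `g`, has all its vertices in `U`. -/
def rhombusOverlap (U : Finset G) (t : Fin 3) (p : G × G) : Finset G :=
  translateOverlap (translateOverlap U (zsmulPair p (rhombusEdge₁ t)))
    (zsmulPair p (rhombusEdge₂ t))

lemma exists_mem_rhombus_notMem {U : Finset G} {t : Fin 3} {p : G × G} {g : G}
    (hg : g ∉ rhombusOverlap U t p) : ∃ z ∈ rhombus t, g - zsmulPair p z ∉ U := by
  contrapose! hg
  have h₀ := hg 0 (by simp [rhombus])
  have h₁₂ := hg (rhombusEdge₁ t + rhombusEdge₂ t) (by simp [rhombus])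
  rw [map_zero, sub_zero] at h₀
  rw [map_add, add_comm, ← sub_sub] at h₁₂
  simp only [rhombusOverlap, translateOverlap, mem_filter]
  exact ⟨⟨h₀, hg _ (by simp [rhombus])⟩, hg _ (by simp [rhombus]), h₁₂⟩

variable [Fintype G]

lemma card_large_rhombusOverlap_mul_le {U : Finset G} {ε K : ℝ} (hε : 0 < ε) (hK : 0 < K)
    (hU : (#U : ℝ) ≤ ε * Fintype.card G) (t : Fin 3) :
    (#{p | K ^ 3 * ε ^ 4 * Fintype.card G < #(rhombusOverlap U t p)} : ℝ) * K ≤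
      2 * (Fintype.card G : ℝ) ^ 2 := by
  refine le_trans ?_ (card_large_double_translateOverlap_mul_le hε hK hU)
  gcongr ?_ * K
  refine Nat.cast_le.2 (card_le_card_of_injOn _ (fun p hp ↦ ?_)
    (zsmulPair_rhombusEdge_injective t).injOn)
  simp only [coe_filter, mem_univ, true_and, Set.mem_ofPred_eq] at hp ⊢
  exact hp

lemma exists_forall_card_rhombusOverlap_le {𝓕 : Finset (Finset G)} {ε K : ℝ} (hε : 0 < ε)
    (hK : 6 * (#𝓕 : ℝ) < K) (h𝓕 : ∀ U ∈ 𝓕, (#U : ℝ) ≤ ε * Fintype.card G) :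
    ∃ p : G × G, ∀ U ∈ 𝓕, ∀ t,
      (#(rhombusOverlap U t p) : ℝ) ≤ K ^ 3 * ε ^ 4 * Fintype.card G := by
  by_contra! hbad
  have hK₀ : 0 < K := lt_of_le_of_lt (by positivity) hK
  set g := (Fintype.card G : ℝ) with hg
  have hg₀ : 0 < g := by rw [hg]; exact_mod_cast Fintype.card_pos
  let bad (x : Finset G × Fin 3) : Finset (G × G) :=
    {p | K ^ 3 * ε ^ 4 * g < #(rhombusOverlap x.1 x.2 p)}
  have univ_subset : (univ : Finset (G × G)) ⊆ (𝓕 ×ˢ univ).biUnion bad := fun p _ ↦ by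
    obtain ⟨U, hU, t, h⟩ := hbad p
    exact mem_biUnion.2 ⟨(U, t), by simpa using hU, by simpa [bad] using h⟩
  have card_le : g ^ 2 ≤ ∑ x ∈ 𝓕 ×ˢ univ, (#(bad x) : ℝ) := by
    have := (card_le_card univ_subset).trans card_biUnion_le
    rw [card_univ, Fintype.card_prod, ← sq] at this
    rw [hg]
    exact_mod_cast this
  have : g ^ 2 * K ≤ g ^ 2 * (6 * #𝓕) := calc
    g ^ 2 * K ≤ ∑ x ∈ 𝓕 ×ˢ univ, (#(bad x) : ℝ) * K := by
        rw [← sum_mul]; gcongr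
    _ ≤ ∑ x ∈ 𝓕 ×ˢ (univ : Finset (Fin 3)), 2 * g ^ 2 := sum_le_sum fun x hx ↦
        card_large_rhombusOverlap_mul_le hε hK₀ (h𝓕 _ (mem_product.1 hx).1) x.2
    _ = g ^ 2 * (6 * #𝓕) := by
        rw [sum_const, card_product, card_univ, Fintype.card_fin, nsmul_eq_mul]
        push_cast; ring
  exact absurd (le_of_mul_le_mul_left this (pow_pos hg₀ 2)) hK.not_ge

end Rhombus

section Avoid

open Finset

variable {G : Type*} [AddCommGroup G] [Fintype G]

lemma exists_pairs_forall_family_avoid (M : ℕ) {𝓕 : Finset (Finset G)} {ε K : ℝ} (hε : 0 < ε)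
    (hK₀ : 0 < K) (hK : 2 * 3 ^ M * (#𝓕 : ℝ) < K)
    (h𝓕 : ∀ U ∈ 𝓕, (#U : ℝ) ≤ ε * Fintype.card G)
    (hsmall : (K * ε) ^ 4 ^ M * Fintype.card G < K) :
    ∃ x : Fin M → G × G, ∀ U ∈ 𝓕, ∀ (τ : Fin M → Fin 3) (g : G), ∃ ζ : Fin M → ℤ × ℤ,
      (∀ i, ζ i ∈ rhombus (τ i)) ∧ g - ∑ i, zsmulPair (x i) (ζ i) ∉ U := by
  classical
  induction M generalizing 𝓕 ε with
  | zero =>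
    refine ⟨Fin.elim0, fun U hU τ g ↦ ⟨Fin.elim0, fun i ↦ i.elim0, ?_⟩⟩
    have hU_lt : (#U : ℝ) < 1 := (h𝓕 U hU).trans_lt <| by
      rw [pow_zero, pow_one, mul_assoc] at hsmall
      exact (mul_lt_iff_lt_one_right hK₀).1 hsmall
    simp [card_eq_zero.1 (Nat.lt_one_iff.1 (by exact_mod_cast hU_lt))]
  | succ M ih =>
    have h3M : (1 : ℝ) ≤ 3 ^ M := one_le_pow₀ (by norm_num)
    obtain ⟨p, hp⟩ := exists_forall_card_rhombusOverlap_le (𝓕 := 𝓕) hε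
      (lt_of_le_of_lt (by rw [pow_succ]; nlinarith [Nat.cast_nonneg (α := ℝ) #𝓕]) hK) h𝓕
    let 𝓕' := (𝓕 ×ˢ univ).image fun y ↦ rhombusOverlap y.1 y.2 p
    have card_𝓕' : (#𝓕' : ℝ) ≤ 3 * #𝓕 := by
      have := card_image_le (s := 𝓕 ×ˢ univ) (f := fun y ↦ rhombusOverlap y.1 y.2 p)
      rw [card_product, card_univ, Fintype.card_fin, mul_comm] at this
      exact_mod_cast this
    obtain ⟨x, hx⟩ := ih (𝓕 := 𝓕') (ε := K ^ 3 * ε ^ 4) (by positivity)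
      (calc 2 * 3 ^ M * (#𝓕' : ℝ) ≤ 2 * 3 ^ M * (3 * #𝓕) := by gcongr
        _ = 2 * 3 ^ (M + 1) * #𝓕 := by ring
        _ < K := hK)
      (fun U hU ↦ by
        obtain ⟨⟨V, t⟩, hV, rfl⟩ := mem_image.1 hU
        exact hp V (mem_product.1 hV).1 t)
      (by rwa [show K * (K ^ 3 * ε ^ 4) = (K * ε) ^ 4 by ring, ← pow_mul, ← pow_succ'])
    refine ⟨Fin.cons p x, fun U hU τ g ↦ ?_⟩
    obtain ⟨ζ, hζ, hg⟩ := hx (rhombusOverlap U (τ 0) p)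
      (mem_image.2 ⟨(U, τ 0), by simpa using hU, rfl⟩) (fun i ↦ τ i.succ) g
    obtain ⟨z, hz, hgz⟩ := exists_mem_rhombus_notMem hg
    refine ⟨Fin.cons z ζ, Fin.cases (by simpa using hz) (by simpa using hζ), ?_⟩
    rwa [Fin.sum_univ_succ, add_comm, ← sub_sub]

lemma exists_pairs_forall_avoid {M : ℕ} {U : Finset G} {ε K : ℝ} (hε : 0 < ε) (hK : 2 * 3 ^ M < K)
    (hU : (#U : ℝ) ≤ ε * Fintype.card G) (hsmall : (K * ε) ^ 4 ^ M * Fintype.card G < K) :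
    ∃ x : Fin M → G × G, ∀ (τ : Fin M → Fin 3) (g : G), ∃ ζ : Fin M → ℤ × ℤ,
      (∀ i, ζ i ∈ rhombus (τ i)) ∧ g - ∑ i, zsmulPair (x i) (ζ i) ∉ U := by
  obtain ⟨x, hx⟩ := exists_pairs_forall_family_avoid M (𝓕 := {U}) hε
    (lt_trans (by positivity) hK) (by simpa using hK) (by simpa using hU) hsmall
  exact ⟨x, hx U (mem_singleton_self U)⟩

end Avoid

section HexagonalForm

open Finset

/-- The squared Euclidean norm of `u • b₁ + v • b₂`, where `b₁, b₂` are unit vectors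
at an angle of `60°`. -/
def hexForm (u v : ℝ) : ℝ := u ^ 2 + u * v + v ^ 2

lemma hexForm_neg_neg (u v : ℝ) : hexForm (-u) (-v) = hexForm u v := by
  simp [hexForm]

-- All vertices of one of the three rhombi based at the origin lie within `√(4/3)` of a given point
-- of a unit triangle; which one depends on the smallest barycentric coordinate of that point.
lemma exists_rhombus_hexForm_le_of_mem_triangle {u v : ℝ} (hu : 0 ≤ u) (hv : 0 ≤ v)
    (huv : u + v ≤ 1) : ∃ t, ∀ e ∈ rhombus t, hexForm (u - e.1) (v - e.2) ≤ 4 / 3 := by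
  have smallest : (1 - u - v ≤ u ∧ 1 - u - v ≤ v) ∨ (u ≤ v ∧ u ≤ 1 - u - v) ∨
      (v ≤ u ∧ v ≤ 1 - u - v) := by grind
  rcases smallest with ⟨h₁, h₂⟩ | ⟨h₁, h₂⟩ | ⟨h₁, h₂⟩
  on_goal 1 => refine ⟨0, ?_⟩
  on_goal 2 => refine ⟨1, ?_⟩
  on_goal 3 => refine ⟨2, ?_⟩
  all_goals
    simp only [rhombus, forall_mem_insert, mem_singleton, forall_eq]
    refine ⟨?_, ?_, ?_, ?_⟩ <;> simp [hexForm, rhombusEdge₁, rhombusEdge₂] <;> nlinarith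

lemma exists_add_rhombus_hexForm_le (u v : ℝ) : ∃ (z : ℤ × ℤ) (t : Fin 3), ∀ e ∈ rhombus t,
    hexForm (u - (z + e).1) (v - (z + e).2) ≤ 4 / 3 := by
  have hu := Int.floor_add_fract u
  have hv := Int.floor_add_fract v
  rcases le_total (Int.fract u + Int.fract v) 1 with h | h
  · obtain ⟨t, ht⟩ := exists_rhombus_hexForm_le_of_mem_triangle
      (Int.fract_nonneg u) (Int.fract_nonneg v) h
    refine ⟨(⌊u⌋, ⌊v⌋), t, fun e he ↦ ?_⟩
    convert ht e he using 2 <;> push_cast [Prod.fst_add, Prod.snd_add] <;> linarith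
  · obtain ⟨t, ht⟩ := exists_rhombus_hexForm_le_of_mem_triangle
      (sub_nonneg.2 (Int.fract_lt_one u).le) (sub_nonneg.2 (Int.fract_lt_one v).le)
      (by linarith)
    refine ⟨(⌊u⌋ + 1, ⌊v⌋ + 1) - (rhombusEdge₁ t + rhombusEdge₂ t), t, fun e he ↦ ?_⟩
    rw [← hexForm_neg_neg]
    convert ht _ (edge_sum_sub_mem_rhombus he) using 2 <;>
      push_cast [Prod.fst_add, Prod.snd_add, Prod.fst_sub, Prod.snd_sub] <;> linarith

end HexagonalForm

/-! ### Lattices from kernels of homomorphisms to a finite group -/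

section Columns

variable {ι : Type*} {n : ℕ}

/-- The columns of a matrix, as vectors of `ℝⁿ`, after identifying its index type
with `Fin n`. -/
def columnVectors (e : ι ≃ Fin n) (B : Matrix ι ι ℝ) (j : Fin n) : EuclideanSpace ℝ (Fin n) :=
  WithLp.toLp 2 fun i ↦ B (e.symm i) (e.symm j)

variable [Fintype ι]

lemma sum_smul_columnVectors_apply (e : ι ≃ Fin n) (B : Matrix ι ι ℝ) (c : ι → ℝ) (i : ι) :
    (∑ j, c (e.symm j) • columnVectors e B j) (e i) = B.mulVec c i := by
  simp only [columnVectors, WithLp.ofLp_sum, WithLp.ofLp_smul, Finset.sum_apply, Pi.smul_apply,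
    smul_eq_mul, Equiv.symm_apply_apply, Matrix.mulVec, dotProduct]
  exact (Equiv.sum_comp e.symm fun k ↦ c k * B i k).trans
    (Finset.sum_congr rfl fun k _ ↦ mul_comm _ _)

variable [DecidableEq ι]

lemma latticeDet_columnVectors (e : ι ≃ Fin n) (B : Matrix ι ι ℝ) :
    latticeDet (columnVectors e B) = |B.det| :=
  congrArg abs (Matrix.det_submatrix_equiv_self e.symm B)

lemma linearIndependent_columnVectors (e : ι ≃ Fin n) {B : Matrix ι ι ℝ} (hB : B.det ≠ 0) :
    LinearIndependent ℝ (columnVectors e B) := by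
  rw [← Matrix.det_submatrix_equiv_self e.symm B] at hB
  exact LinearIndependent.of_comp (WithLp.linearEquiv 2 ℝ (Fin n → ℝ)).toLinearMap
    (Matrix.linearIndependent_cols_of_det_ne_zero hB)

lemma isLatticeCovering_columnVectors (e : ι ≃ Fin n) {B : Matrix ι ι ℝ} (hB : B.det ≠ 0) {R : ℝ}
    (hR : 0 ≤ R)
    (hcover : ∀ y : ι → ℝ, ∃ c : ι → ℤ, ∑ i, (y i - B.mulVec (fun j ↦ (c j : ℝ)) i) ^ 2 ≤ R ^ 2) :
    IsLatticeCovering (columnVectors e B) R := by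
  refine ⟨linearIndependent_columnVectors e hB, Set.eq_univ_iff_forall.2 fun x ↦ ?_⟩
  obtain ⟨c, hc⟩ := hcover fun i ↦ x (e i)
  set z := ∑ j, (c (e.symm j) : ℝ) • columnVectors e B j with hz
  refine Set.mem_add.2 ⟨z, ⟨fun j ↦ c (e.symm j), hz⟩, x - z, ?_, add_sub_cancel z x⟩
  rw [mem_closedBall_zero_iff, EuclideanSpace.norm_eq]
  refine Real.sqrt_le_iff.2 ⟨hR, le_of_eq_of_le ?_ hc⟩
  rw [← Equiv.sum_comp e]
  refine Finset.sum_congr rfl fun i _ ↦ ?_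
  rw [← sum_smul_columnVectors_apply e B (fun j ↦ (c j : ℝ)), Real.norm_eq_abs, sq_abs]
  rfl

end Columns

section Kernel

variable {ι G : Type*} [Fintype ι] [DecidableEq ι] [AddCommGroup G] [Finite G]

lemma exists_basis_ker_natAbs_det {φ : (ι → ℤ) →ₗ[ℤ] G} (hφ : Function.Surjective φ) :
    ∃ b : Module.Basis ι ℤ (LinearMap.ker φ),
      (Matrix.of fun i j ↦ (b j : ι → ℤ) i).det.natAbs = Nat.card G := by
  let quotEquiv := LinearMap.quotKerEquivOfSurjective φ hφ
  have : Finite ((ι → ℤ) ⧸ LinearMap.ker φ) := Finite.of_equiv G quotEquiv.symm.toEquiv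
  have finrank_ker : Module.finrank ℤ (LinearMap.ker φ) = Fintype.card ι := by
    rw [(Submodule.finiteQuotient_iff _).1 inferInstance, Module.finrank_pi]
  let b := (Module.finBasisOfFinrankEq ℤ _ finrank_ker).reindex (Fintype.equivFin ι).symm
  refine ⟨b, ?_⟩
  rw [← Nat.card_congr quotEquiv.toEquiv]
  exact (congrArg Int.natAbs (Module.Basis.det_apply _ _)).symm.trans
    (Submodule.natAbs_det_basis_change (Pi.basisFun ℤ ι) (LinearMap.ker φ) b)

lemma exists_isLatticeCovering_of_ker {n : ℕ} (e : ι ≃ Fin n) {φ : (ι → ℤ) →+ G}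
    (hφ : Function.Surjective φ) {P : Matrix ι ι ℝ} (hP : P.det ≠ 0) {R : ℝ} (hR : 0 ≤ R)
    (hcover : ∀ y : ι → ℝ, ∃ z, φ z = 0 ∧
      ∑ i, (y i - P.mulVec (fun j ↦ (z j : ℝ)) i) ^ 2 ≤ R ^ 2) :
    ∃ b : Fin n → EuclideanSpace ℝ (Fin n),
      IsLatticeCovering b R ∧ latticeDet b = Nat.card G * |P.det| := by
  obtain ⟨k, hk⟩ := exists_basis_ker_natAbs_det (φ := φ.toIntLinearMap) hφ
  set Z : Matrix ι ι ℤ := Matrix.of fun i j ↦ (k j : ι → ℤ) i with hZ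
  have det_eq : |(P * Z.map (Int.cast : ℤ → ℝ)).det| = Nat.card G * |P.det| := by
    rw [Matrix.det_mul, abs_mul, mul_comm, ← hk, Nat.cast_natAbs, Int.cast_abs, Int.cast_det]
  refine ⟨columnVectors e (P * Z.map (Int.cast : ℤ → ℝ)), ?_,
    (latticeDet_columnVectors _ _).trans det_eq⟩
  refine isLatticeCovering_columnVectors e ?_ hR fun y ↦ ?_
  · rw [← abs_pos, det_eq]
    exact mul_pos (Nat.cast_pos.2 Nat.card_pos) (abs_pos.2 hP)
  · obtain ⟨z, hz, hyz⟩ := hcover y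
    let c := k.repr ⟨z, hz⟩
    have z_eq : (fun j ↦ (z j : ℝ)) = (Z.map (Int.cast : ℤ → ℝ)).mulVec fun j ↦ (c j : ℝ) := by
      ext i
      have : z i = ∑ j, c j * (k j : ι → ℤ) i := by
        have := congrFun (congrArg Subtype.val (k.sum_repr ⟨z, hz⟩)) i
        rw [Submodule.coe_sum, Finset.sum_apply] at this
        exact this.symm
      simp [this, hZ, Matrix.mulVec, dotProduct, mul_comm]
    refine ⟨c, ?_⟩
    rwa [← Matrix.mulVec_mulVec, ← z_eq]

end Kernel

section HexagonalSum

open Finset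

lemma sum_sub_sq_le_add_sq {ι : Type*} [Fintype ι] {a b : ι → ℝ} {A B : ℝ} (hA : 0 ≤ A)
    (hB : 0 ≤ B) (ha : ∑ i, a i ^ 2 ≤ A ^ 2) (hb : ∑ i, b i ^ 2 ≤ B ^ 2) :
    ∑ i, (a i - b i) ^ 2 ≤ (A + B) ^ 2 := by
  have norm_sq (c : ι → ℝ) : ‖WithLp.toLp 2 c‖ ^ 2 = ∑ i, c i ^ 2 := by
    simp [EuclideanSpace.norm_sq_eq]
  have ha' : ‖WithLp.toLp 2 a‖ ≤ A := abs_le_of_sq_le_sq' (by rwa [norm_sq]) hA |>.2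
  have hb' : ‖WithLp.toLp 2 b‖ ≤ B := abs_le_of_sq_le_sq' (by rwa [norm_sq]) hB |>.2
  calc ∑ i, (a i - b i) ^ 2 = ‖WithLp.toLp 2 a - WithLp.toLp 2 b‖ ^ 2 :=
        (norm_sq (a - b)).symm
    _ ≤ (A + B) ^ 2 := by
        gcongr
        exact (norm_sub_le _ _).trans (add_le_add ha' hb')

lemma sum_sub_round_sq_le {N : ℕ} (y : Fin N → ℝ) : ∑ i, (y i - round (y i)) ^ 2 ≤ (√N / 2) ^ 2 :=
  calc ∑ i, (y i - round (y i)) ^ 2 ≤ ∑ _i : Fin N, (1 / 2 : ℝ) ^ 2 := by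
        gcongr ∑ _i, ?_ with i
        exact sq_le_sq' (abs_le.1 (abs_sub_round (y i))).1 (abs_le.1 (abs_sub_round (y i))).2
    _ = (√N / 2) ^ 2 := by
        rw [sum_const, card_univ, Fintype.card_fin, nsmul_eq_mul, div_pow √N,
          Real.sq_sqrt N.cast_nonneg]
        ring

/-- A basis matrix of the lattice `ℤᴺ ⊕ (s A₂)ᴹ`, where `A₂` is the hexagonal lattice with
minimal distance `1`. The two coordinates in each plane are indexed by the two copies
of `Fin M`. -/
def hexSumMatrix (N M : ℕ) (s : ℝ) :
    Matrix (Fin N ⊕ (Fin M ⊕ Fin M)) (Fin N ⊕ (Fin M ⊕ Fin M)) ℝ :=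
  Matrix.fromBlocks 1 0 0 (Matrix.fromBlocks (s • 1) ((s / 2) • 1) 0 ((s * √3 / 2) • 1))

/-- The coordinate vector on `ℤᴺ ⊕ (ℤ²)ᴹ` with components `t` and `ζ`. -/
def hexSumCoord {N M : ℕ} (t : Fin N → ℤ) (ζ : Fin M → ℤ × ℤ) : Fin N ⊕ (Fin M ⊕ Fin M) → ℤ :=
  Sum.elim t (Sum.elim (fun i ↦ (ζ i).1) fun i ↦ (ζ i).2)

lemma det_hexSumMatrix (N M : ℕ) (s : ℝ) : (hexSumMatrix N M s).det = (s ^ 2 * √3 / 2) ^ M := by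
  rw [hexSumMatrix, Matrix.det_fromBlocks_zero₂₁, Matrix.det_fromBlocks_zero₂₁]
  simp only [Matrix.det_one, Matrix.det_smul, Fintype.card_fin, mul_one, one_mul, ← mul_pow]
  congr 1
  ring

lemma hexSumMatrix_mulVec {N M : ℕ} (s : ℝ) (t : Fin N → ℤ) (ζ : Fin M → ℤ × ℤ) :
    (hexSumMatrix N M s).mulVec (fun j ↦ (hexSumCoord t ζ j : ℝ)) =
      Sum.elim (fun i ↦ (t i : ℝ)) (Sum.elim (fun i ↦ s * (ζ i).1 + s / 2 * (ζ i).2)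
        fun i ↦ s * √3 / 2 * (ζ i).2) := by
  ext (i | i | i) <;>
    simp [hexSumMatrix, hexSumCoord, Matrix.mulVec, dotProduct, Matrix.one_apply]

lemma exists_sum_hexagonal_dist_sq_le {M : ℕ} {s : ℝ} (hs : 0 < s) (y₁ y₂ : Fin M → ℝ) :
    ∃ (z : Fin M → ℤ × ℤ) (τ : Fin M → Fin 3), ∀ ζ : Fin M → ℤ × ℤ, (∀ i, ζ i ∈ rhombus (τ i)) →
      ∑ i, ((y₁ i - (s * (z i + ζ i).1 + s / 2 * (z i + ζ i).2)) ^ 2 +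
        (y₂ i - s * √3 / 2 * (z i + ζ i).2) ^ 2) ≤ 4 / 3 * s ^ 2 * M := by
  let v (i : Fin M) : ℝ := 2 * y₂ i / (s * √3)
  let u (i : Fin M) : ℝ := y₁ i / s - v i / 2
  choose z τ hzτ using fun i ↦ exists_add_rhombus_hexForm_le (u i) (v i)
  refine ⟨z, τ, fun ζ hζ ↦ ?_⟩
  have dist_eq (i : Fin M) (w : ℤ × ℤ) : (y₁ i - (s * w.1 + s / 2 * w.2)) ^ 2 +
      (y₂ i - s * √3 / 2 * w.2) ^ 2 = s ^ 2 * hexForm (u i - w.1) (v i - w.2) := by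
    have hy₁ : y₁ i = s * u i + s / 2 * v i := by simp only [u]; field_simp; ring
    have hy₂ : y₂ i = s * √3 / 2 * v i := by simp only [v]; field_simp
    rw [hy₁, hy₂, hexForm]
    linear_combination s ^ 2 / 4 * (v i - w.2) ^ 2 * Real.sq_sqrt (zero_le_three (α := ℝ))
  simp only [dist_eq]
  calc _ ≤ ∑ _i : Fin M, s ^ 2 * (4 / 3) := by
        gcongr ∑ _i, s ^ 2 * ?_ with i
        exact hzτ i (ζ i) (hζ i)
    _ = 4 / 3 * s ^ 2 * M := by
        rw [sum_const, card_univ, Fintype.card_fin, nsmul_eq_mul]; ring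

variable {G : Type*} [AddCommGroup G]

/-- The homomorphism `ℤᴺ ⊕ (ℤ²)ᴹ → G` given by `w` on the first summand and by `zsmulPair (x i)`
on the `i`-th plane. -/
def hexSumHom {N M : ℕ} (w : (Fin N → ℤ) →+ G) (x : Fin M → G × G) :
    (Fin N ⊕ (Fin M ⊕ Fin M) → ℤ) →+ G where
  toFun z := w (fun i ↦ z (Sum.inl i)) +
    ∑ i, zsmulPair (x i) (z (Sum.inr (Sum.inl i)), z (Sum.inr (Sum.inr i)))
  map_zero' := by
    have hw : w (fun _ ↦ 0) = 0 := map_zero w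
    simp [hw, zsmulPair_apply]
  map_add' a b := by
    have hw : w (fun i ↦ (a + b) (Sum.inl i)) =
        w (fun i ↦ a (Sum.inl i)) + w (fun i ↦ b (Sum.inl i)) := map_add w _ _
    rw [hw]
    simp only [Pi.add_apply, ← Prod.mk_add_mk, map_add, sum_add_distrib]
    abel

lemma hexSumHom_hexSumCoord {N M : ℕ} (w : (Fin N → ℤ) →+ G) (x : Fin M → G × G) (t : Fin N → ℤ)
    (ζ : Fin M → ℤ × ℤ) :
    hexSumHom w x (hexSumCoord t ζ) = w t + ∑ i, zsmulPair (x i) (ζ i) :=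
  rfl

variable [Finite G]

lemma exists_isLatticeCovering_of_rhombus_hits {N M n : ℕ} (hn : N + 2 * M = n)
    (w : (Fin N → ℤ) →+ G) {S : Finset (Fin N → ℤ)} {ρ s : ℝ} (hρ : 0 ≤ ρ) (hs : 0 < s)
    (hS : ∀ t ∈ S, ∑ i, (t i : ℝ) ^ 2 ≤ ρ ^ 2) (x : Fin M → G × G)
    (hit : ∀ (τ : Fin M → Fin 3) (g : G), ∃ ζ : Fin M → ℤ × ℤ,
      (∀ i, ζ i ∈ rhombus (τ i)) ∧ ∃ t ∈ S, w t = g - ∑ i, zsmulPair (x i) (ζ i)) :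
    ∃ b : Fin n → EuclideanSpace ℝ (Fin n),
      IsLatticeCovering b √((√N / 2 + ρ) ^ 2 + 4 / 3 * s ^ 2 * M) ∧
      latticeDet b = Nat.card G * (s ^ 2 * √3 / 2) ^ M := by
  have surjective : Function.Surjective (hexSumHom w x) := fun g ↦ by
    obtain ⟨ζ, _, t, _, ht⟩ := hit (fun _ ↦ 0) g
    exact ⟨hexSumCoord t ζ, by rw [hexSumHom_hexSumCoord, ht, sub_add_cancel]⟩
  have det_pos : 0 < (hexSumMatrix N M s).det := by rw [det_hexSumMatrix]; positivity
  let e : Fin N ⊕ (Fin M ⊕ Fin M) ≃ Fin n := Fintype.equivFinOfCardEq (by simp; lia)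
  rw [← det_hexSumMatrix N, ← abs_of_pos det_pos]
  refine exists_isLatticeCovering_of_ker e surjective det_pos.ne' (Real.sqrt_nonneg _) fun y ↦ ?_
  obtain ⟨z, τ, hzτ⟩ := exists_sum_hexagonal_dist_sq_le hs
    (fun i ↦ y (Sum.inr (Sum.inl i))) fun i ↦ y (Sum.inr (Sum.inr i))
  let t (i : Fin N) : ℤ := round (y (Sum.inl i))
  obtain ⟨ζ, hζ, t', ht', hw⟩ := hit τ (-w t - ∑ i, zsmulPair (x i) (z i))
  refine ⟨hexSumCoord (t + t') (z + ζ), ?_, ?_⟩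
  · simp only [hexSumHom_hexSumCoord, Pi.add_apply, map_add, hw, sum_add_distrib]
    abel
  · rw [Real.sq_sqrt (by positivity), hexSumMatrix_mulVec, Fintype.sum_sum_type,
      Fintype.sum_sum_type, ← sum_add_distrib]
    refine add_le_add ?_ (hzτ ζ hζ)
    have := sum_sub_sq_le_add_sq (by positivity) hρ (sum_sub_round_sq_le fun i ↦ y (Sum.inl i))
      (hS t' ht')
    simpa [t, sub_sub] using this

end HexagonalSum

section ReductionMod

open Finset

/-- Coordinatewise reduction modulo `q`. -/
def reduceMod (q N : ℕ) : (Fin N → ℤ) →+ (Fin N → ZMod q) :=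
  (Int.castAddHom (ZMod q)).compLeft (Fin N)

lemma reduceMod_apply (q N : ℕ) (s : Fin N → ℤ) (i : Fin N) : reduceMod q N s i = s i := rfl

lemma exists_isLatticeCovering_of_fewRelations {q : ℕ} [Fact q.Prime] {N M n k v : ℕ}
    (hn : N + 2 * M = n) (hv : 0 < v) {S : Finset (Fin N → ℤ)} {ρ s η K : ℝ} (hρ : 0 ≤ ρ)
    (hs : 0 < s) (hS : ∀ t ∈ S, ∑ i, (t i : ℝ) ^ 2 ≤ ρ ^ 2)
    (hS_inj : Set.InjOn (reduceMod q N) S) (hS_card : #S = v * q ^ k) (hη : 0 ≤ η)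
    (hη_le : η ≤ Real.exp (-(5 * v)))
    (hS_rel : FewRelations (ZMod q) (S.image (reduceMod q N)) η (8 * v))
    (hq : 20 * v * Real.exp (2 * v) ≤ (q : ℝ) ^ k) (hK : 2 * 3 ^ M < K)
    (hsmall : (K * (4 * Real.exp (-v))) ^ 4 ^ M * (q : ℝ) ^ k < K) :
    ∃ b : Fin n → EuclideanSpace ℝ (Fin n),
      IsLatticeCovering b √((√N / 2 + ρ) ^ 2 + 4 / 3 * s ^ 2 * M) ∧
      latticeDet b = (q : ℝ) ^ k * (s ^ 2 * √3 / 2) ^ M := by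
  classical
  have card_G : Fintype.card (Fin k → ZMod q) = q ^ k := by
    rw [Fintype.card_fun, ZMod.card, Fintype.card_fin]
  have card_G' : (Fintype.card (Fin k → ZMod q) : ℝ) = (q : ℝ) ^ k := by
    rw [card_G, Nat.cast_pow]
  obtain ⟨W, hW⟩ := exists_linearMap_card_missed_le (G := Fin k → ZMod q) hv hη hη_le
    (by rwa [card_G']) hS_rel (by rw [card_image_of_injOn hS_inj, hS_card, card_G])
  obtain ⟨x, hx⟩ := exists_pairs_forall_avoid (by positivity) hK hW (by rwa [card_G'])
  rw [← card_G', ← Nat.card_eq_fintype_card]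
  refine exists_isLatticeCovering_of_rhombus_hits hn (W.toAddMonoidHom.comp (reduceMod q N)) hρ hs
    hS x fun τ g ↦ ?_
  obtain ⟨ζ, hζ, hg⟩ := hx τ g
  refine ⟨ζ, hζ, ?_⟩
  simpa using hg

end ReductionMod

/-! ### Counting relations with binomial weights -/

section BinomialWeight

open Finset

/-- The probability `4⁻ᴮ (2B choose B)` that a sum of `2B` fair signs vanishes. -/
def centralBinomProb (B : ℕ) : ℝ := (4 : ℝ)⁻¹ ^ B * B.centralBinom

/-- The probability that a binomial variable with parameters `2b` and `1/2`, centred at its mean,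
is congruent to `y` modulo `q`. -/
def binomWeight (q b : ℕ) (y : ZMod q) : ℝ :=
  (4 : ℝ)⁻¹ ^ b * ∑ t ∈ range (2 * b + 1),
    ((2 * b).choose t : ℝ) * if (t - b : ZMod q) = y then 1 else 0

lemma binomWeight_nonneg (q b : ℕ) (y : ZMod q) : 0 ≤ binomWeight q b y :=
  mul_nonneg (by positivity) (sum_nonneg fun _ _ ↦ by split_ifs <;> positivity)

lemma centralBinomProb_pos (B : ℕ) : 0 < centralBinomProb B :=
  mul_pos (by positivity) (Nat.cast_pos.2 B.centralBinom_pos)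

lemma binomWeight_zero {q B : ℕ} (hB : B < q) : binomWeight q B 0 = centralBinomProb B := by
  rw [binomWeight, centralBinomProb, Nat.centralBinom_eq_two_mul_choose,
    sum_eq_single_of_mem B (mem_range.2 (by lia))]
  · simp
  · intro t ht htB
    rw [if_neg, mul_zero]
    rw [sub_eq_zero, ZMod.natCast_eq_natCast_iff, Nat.modEq_iff_dvd]
    intro hdvd
    rw [mem_range] at ht
    have := Int.eq_zero_of_abs_lt_dvd hdvd (by rw [abs_lt]; lia)
    lia

section Fourier

variable {q : ℕ} [NeZero q]

/-- The Fourier transform of the weights `binomWeight q 1`. -/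
def cosWeight (ξ : ZMod q) : ℝ := (1 + (ZMod.stdAddChar ξ : ℂ).re) / 2

lemma norm_stdAddChar (ξ : ZMod q) : ‖(ZMod.stdAddChar ξ : ℂ)‖ = 1 := by
  rw [ZMod.stdAddChar_apply]
  exact Circle.norm_coe _

lemma cosWeight_nonneg (ξ : ZMod q) : 0 ≤ cosWeight ξ := by
  have := abs_le.1 ((Complex.abs_re_le_norm _).trans_eq (norm_stdAddChar ξ))
  rw [cosWeight]
  linarith [this.1]

lemma cosWeight_eq (ξ : ZMod q) :
    (cosWeight ξ : ℂ) = 4⁻¹ * (ZMod.stdAddChar ξ + 1) ^ 2 * (ZMod.stdAddChar ξ)⁻¹ := by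
  set z : ℂ := ZMod.stdAddChar ξ with hz
  have hz₀ : z ≠ 0 := norm_ne_zero_iff.1 (by rw [norm_stdAddChar]; exact one_ne_zero)
  have inv_eq_conj : z⁻¹ = starRingEnd ℂ z := by
    rw [Complex.inv_def, Complex.normSq_eq_norm_sq, norm_stdAddChar]
    simp
  have expand : (z + 1) ^ 2 * z⁻¹ = z + z⁻¹ + 2 := by field_simp; ring
  rw [mul_assoc, expand, inv_eq_conj, Complex.add_conj, cosWeight, ← hz]
  push_cast
  ring

lemma cosWeight_pow (b : ℕ) (ξ : ZMod q) :
    ((cosWeight ξ ^ b : ℝ) : ℂ) = (4 : ℂ)⁻¹ ^ b * ∑ t ∈ range (2 * b + 1),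
      ((2 * b).choose t : ℂ) * ZMod.stdAddChar (ξ * (t - b : ZMod q)) := by
  set z : ℂ := ZMod.stdAddChar ξ with hz
  have char_eq (t : ℕ) : (ZMod.stdAddChar (ξ * (t - b : ZMod q)) : ℂ) = z ^ t * z⁻¹ ^ b := by
    have : ξ * (t - b : ZMod q) = t • ξ + -(b • ξ) := by
      simp only [nsmul_eq_mul]; ring
    rw [this, AddChar.map_add_eq_mul, AddChar.map_neg_eq_inv, AddChar.map_nsmul_eq_pow,
      AddChar.map_nsmul_eq_pow, inv_pow]
  have binomial : ∑ t ∈ range (2 * b + 1), ((2 * b).choose t : ℂ) * (z ^ t * z⁻¹ ^ b) =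
      (z + 1) ^ (2 * b) * z⁻¹ ^ b := by
    rw [add_pow, sum_mul]
    exact sum_congr rfl fun t _ ↦ by ring
  simp only [char_eq]
  rw [binomial, Complex.ofReal_pow, cosWeight_eq, ← hz, mul_pow, mul_pow, pow_mul, mul_assoc]

lemma sum_binomWeight_mul_stdAddChar (b : ℕ) (ξ : ZMod q) :
    ∑ x : ZMod q, (binomWeight q b x : ℂ) * ZMod.stdAddChar (ξ * x) =
      ((cosWeight ξ ^ b : ℝ) : ℂ) := by
  simp only [cosWeight_pow, binomWeight, Complex.ofReal_mul, Complex.ofReal_sum, mul_assoc, sum_mul,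
    ← mul_sum]
  rw [sum_comm]
  push_cast
  congr 1
  refine sum_congr rfl fun t _ ↦ ?_
  rw [sum_eq_single_of_mem (t - b : ZMod q) (mem_univ _) fun x _ hx ↦ by
    rw [if_neg hx.symm]; simp]
  simp

lemma natCast_mul_binomWeight (b : ℕ) (y : ZMod q) :
    (q : ℂ) * binomWeight q b y =
      ∑ ξ : ZMod q, ((cosWeight ξ ^ b : ℝ) : ℂ) * ZMod.stdAddChar (ξ * -y) := by
  have orthogonality (t : ℕ) : ∑ ξ : ZMod q, (ZMod.stdAddChar (ξ * (t - b : ZMod q)) : ℂ) *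
      ZMod.stdAddChar (ξ * -y) = q * if (t - b : ZMod q) = y then 1 else 0 := by
    simp only [← AddChar.map_add_eq_mul, ← mul_add, ← sub_eq_add_neg]
    rw [AddChar.sum_mulShift _ (ZMod.isPrimitive_stdAddChar q), ZMod.card]
    simp only [sub_eq_zero, mul_ite, mul_one, mul_zero, Nat.cast_ite, Nat.cast_zero]
  simp only [cosWeight_pow, mul_assoc, sum_mul, ← mul_sum]
  rw [sum_comm]
  simp only [← mul_sum, orthogonality]
  rw [binomWeight]
  push_cast
  rw [mul_left_comm, mul_sum]
  congr 1
  exact sum_congr rfl fun t _ ↦ by split_ifs <;> simp [mul_comm]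

lemma sum_cosWeight_pow {B : ℕ} (hB : B < q) :
    ∑ ξ : ZMod q, cosWeight ξ ^ B = q * centralBinomProb B := by
  have := natCast_mul_binomWeight B (0 : ZMod q)
  simp only [neg_zero, mul_zero, AddChar.map_zero_eq_one, mul_one, binomWeight_zero hB] at this
  exact_mod_cast this.symm

lemma natCast_mul_sum_prod_binomWeight (b : ℕ) {κ : Type*} [Fintype κ] [DecidableEq κ]
    (μ : κ → ZMod q) :
    (q : ℝ) * ∑ x : κ → ZMod q, (∏ t, binomWeight q b (x t)) * binomWeight q b (∑ t, μ t * x t) =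
      ∑ ξ : ZMod q, cosWeight ξ ^ b * ∏ t, cosWeight (ξ * -μ t) ^ b := by
  have char_prod (ξ : ZMod q) (x : κ → ZMod q) : (ZMod.stdAddChar (ξ * -∑ t, μ t * x t) : ℂ) =
      ∏ t, ZMod.stdAddChar (ξ * -μ t * x t) := by
    rw [← sum_neg_distrib, mul_sum]
    simp only [← neg_mul, ← mul_assoc]
    exact map_prod (AddChar.toMonoidHom (ZMod.stdAddChar : AddChar (ZMod q) ℂ))
      (fun t ↦ Multiplicative.ofAdd (ξ * -μ t * x t)) univ
  rw [← Complex.ofReal_inj]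
  calc (((q : ℝ) * ∑ x : κ → ZMod q,
        (∏ t, binomWeight q b (x t)) * binomWeight q b (∑ t, μ t * x t) : ℝ) : ℂ)
      = ∑ x : κ → ZMod q, (∏ t, (binomWeight q b (x t) : ℂ)) *
          (q * binomWeight q b (∑ t, μ t * x t)) := by
        push_cast
        rw [mul_sum]
        exact sum_congr rfl fun x _ ↦ mul_left_comm _ _ _
    _ = ∑ ξ : ZMod q, ((cosWeight ξ ^ b : ℝ) : ℂ) * ∑ x : κ → ZMod q,
          ∏ t, ((binomWeight q b (x t) : ℂ) * ZMod.stdAddChar (ξ * -μ t * x t)) := by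
        simp only [natCast_mul_binomWeight, char_prod, mul_sum, prod_mul_distrib]
        rw [sum_comm]
        exact sum_congr rfl fun ξ _ ↦ sum_congr rfl fun x _ ↦ mul_left_comm _ _ _
    _ = ∑ ξ : ZMod q, ((cosWeight ξ ^ b : ℝ) : ℂ) * ∏ t, ((cosWeight (ξ * -μ t) ^ b : ℝ) : ℂ) := by
        refine sum_congr rfl fun ξ _ ↦ congrArg _ ?_
        rw [← Fintype.prod_sum fun t x ↦
          (binomWeight q b x : ℂ) * ZMod.stdAddChar (ξ * -μ t * x)]
        exact prod_congr rfl fun t _ ↦ sum_binomWeight_mul_stdAddChar b _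
    _ = _ := by push_cast; rfl

end Fourier

lemma prod_le_sum_pow_card_div {ι : Type*} [Fintype ι] [Nonempty ι] {a : ι → ℝ}
    (ha : ∀ i, 0 ≤ a i) :
    ∏ i, a i ≤ (∑ i, a i ^ Fintype.card ι) / Fintype.card ι := by
  have := Real.geom_mean_le_arith_mean_weighted univ (fun _ ↦ (Fintype.card ι : ℝ)⁻¹)
    (fun i ↦ a i ^ Fintype.card ι) (fun _ _ ↦ by positivity) (by simp)
    fun i _ ↦ pow_nonneg (ha i) _
  simpa only [Real.pow_rpow_inv_natCast (ha _) Fintype.card_ne_zero, inv_mul_eq_div, sum_div]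
    using this

variable {q : ℕ} [Fact q.Prime]

lemma sum_cosWeight_pow_mul_prod_le (b : ℕ) {κ : Type*} [Fintype κ] {μ : κ → ZMod q}
    (hμ : ∀ t, μ t ≠ 0) :
    ∑ ξ : ZMod q, cosWeight ξ ^ b * ∏ t, cosWeight (ξ * -μ t) ^ b ≤
      ∑ ξ : ZMod q, cosWeight ξ ^ (b * (Fintype.card κ + 1)) := by
  let ν (o : Option κ) : ZMod q := o.elim 1 fun t ↦ -μ t
  have hν : ∀ o, ν o ≠ 0 := Option.rec one_ne_zero fun t ↦ neg_ne_zero.2 (hμ t)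
  set c := Fintype.card κ + 1
  have card_option : Fintype.card (Option κ) = c := Fintype.card_option
  calc _ = ∑ ξ : ZMod q, ∏ o, cosWeight (ξ * ν o) ^ b := by
        simp [Fintype.prod_option, ν]
    _ ≤ ∑ ξ : ZMod q, (∑ o, (cosWeight (ξ * ν o) ^ b) ^ c) / c := by
        refine sum_le_sum fun ξ _ ↦ ?_
        rw [← card_option]
        exact prod_le_sum_pow_card_div fun o ↦ pow_nonneg (cosWeight_nonneg _) _
    _ = (∑ o, ∑ ξ : ZMod q, cosWeight (ξ * ν o) ^ (b * c)) / c := by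
        rw [← sum_div, sum_comm]
        simp only [← pow_mul]
    _ = (∑ _o : Option κ, ∑ ξ : ZMod q, cosWeight ξ ^ (b * c)) / c := by
        congr 1
        exact sum_congr rfl fun o _ ↦
          Equiv.sum_comp (Equiv.mulRight₀ (ν o) (hν o)) fun ξ ↦ cosWeight ξ ^ (b * c)
    _ = ∑ ξ : ZMod q, cosWeight ξ ^ (b * c) := by
        rw [sum_const, card_univ, card_option, nsmul_eq_mul,
          mul_div_cancel_left₀ _ (Nat.cast_ne_zero.2 (Nat.succ_ne_zero _))]

lemma sum_prod_binomWeight_le (b : ℕ) {κ : Type*} [Fintype κ] [DecidableEq κ] {μ : κ → ZMod q}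
    (hμ : ∀ t, μ t ≠ 0) (hb : b * (Fintype.card κ + 1) < q) :
    ∑ x : κ → ZMod q, (∏ t, binomWeight q b (x t)) * binomWeight q b (∑ t, μ t * x t) ≤
      centralBinomProb (b * (Fintype.card κ + 1)) := by
  refine le_of_mul_le_mul_left ?_ (Nat.cast_pos.2 (NeZero.pos q) : (0 : ℝ) < q)
  rw [natCast_mul_sum_prod_binomWeight, ← sum_cosWeight_pow hb]
  exact sum_cosWeight_pow_mul_prod_le b hμ

lemma card_relations_le {N b : ℕ} {S : Finset (Fin N → ZMod q)} {A : ℝ} (hA : 0 ≤ A)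
    (hS : ∀ s ∈ S, 1 ≤ A * ∏ i, binomWeight q b (s i)) {κ : Type*} [Fintype κ]
    {μ : κ → ZMod q} (hμ : ∀ t, μ t ≠ 0) (hb : b * (Fintype.card κ + 1) < q) :
    (#(relations S μ) : ℝ) ≤
      A ^ (Fintype.card κ + 1) * centralBinomProb (b * (Fintype.card κ + 1)) ^ N := by
  classical
  let h (x : κ → ZMod q) : ℝ :=
    (∏ t, binomWeight q b (x t)) * binomWeight q b (∑ t, μ t * x t)
  have h_nonneg (x : κ → ZMod q) : 0 ≤ h x :=
    mul_nonneg (prod_nonneg fun _ _ ↦ binomWeight_nonneg q b _) (binomWeight_nonneg q b _)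
  have one_le (f : κ → Fin N → ZMod q) (hf : f ∈ relations S μ) :
      1 ≤ A ^ (Fintype.card κ + 1) * ∏ i, h fun t ↦ f t i := by
    obtain ⟨hf_mem, hf_sum⟩ := mem_relations.1 hf
    calc (1 : ℝ) ≤ (∏ t, (A * ∏ i, binomWeight q b (f t i))) *
          (A * ∏ i, binomWeight q b ((∑ t, μ t • f t) i)) :=
        one_le_mul_of_one_le_of_one_le (one_le_prod fun t _ ↦ hS _ (hf_mem t)) (hS _ hf_sum)
      _ = A ^ (Fintype.card κ + 1) * ∏ i, h fun t ↦ f t i := by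
        simp only [h, prod_mul_distrib, prod_const, card_univ, Finset.sum_apply, Pi.smul_apply,
          smul_eq_mul, pow_succ]
        rw [prod_comm]
        ring
  calc (#(relations S μ) : ℝ) = ∑ _f ∈ relations S μ, (1 : ℝ) := by simp
    _ ≤ ∑ f ∈ relations S μ, A ^ (Fintype.card κ + 1) * ∏ i, h fun t ↦ f t i := sum_le_sum one_le
    _ ≤ ∑ f : κ → Fin N → ZMod q, A ^ (Fintype.card κ + 1) * ∏ i, h fun t ↦ f t i :=
        sum_le_sum_of_subset_of_nonneg (subset_univ _) fun _ _ _ ↦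
          mul_nonneg (pow_nonneg hA _) (prod_nonneg fun _ _ ↦ h_nonneg _)
    _ = A ^ (Fintype.card κ + 1) * (∑ x, h x) ^ N := by
        rw [← mul_sum, Fintype.sum_pow h N]
        congr 1
        exact Fintype.sum_equiv (Equiv.piComm fun (_ : κ) (_ : Fin N) ↦ ZMod q) _ _ fun _ ↦ rfl
    _ ≤ _ := by
        gcongr
        · exact sum_nonneg fun x _ ↦ h_nonneg x
        · exact sum_prod_binomWeight_le b hμ hb

lemma centralBinomProb_sq_mul_wallis (B : ℕ) :
    centralBinomProb B ^ 2 * (Real.Wallis.W B * (2 * B + 1)) = 1 := by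
  have choose_eq : (B.centralBinom : ℝ) = (2 * B).factorial / (B.factorial * B.factorial) := by
    rw [Nat.centralBinom_eq_two_mul_choose, Nat.cast_choose ℝ (by lia), two_mul,
      Nat.add_sub_cancel]
  have pow_eq : (2 : ℝ) ^ (4 * B) = (4 ^ B) ^ 2 := by
    rw [← pow_mul, show (4 : ℝ) = 2 ^ 2 by norm_num, ← pow_mul]
    ring_nf
  have hB : (B.factorial : ℝ) ≠ 0 := Nat.cast_ne_zero.2 B.factorial_ne_zero
  have h2B : ((2 * B).factorial : ℝ) ≠ 0 := Nat.cast_ne_zero.2 (2 * B).factorial_ne_zero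
  rw [Real.Wallis.W_eq_factorial_ratio, centralBinomProb, choose_eq, pow_eq, inv_pow]
  field_simp

lemma centralBinomProb_sq_le {B : ℕ} (hB : 0 < B) :
    centralBinomProb B ^ 2 ≤ 1 / (Real.pi * B) := by
  have hB' : (0 : ℝ) < B := Nat.cast_pos.2 hB
  have hπ := Real.pi_pos
  have wallis_ge : Real.pi * B ≤ Real.Wallis.W B * (2 * B + 1) :=
    calc Real.pi * B ≤ (2 * B + 1) / (2 * B + 2) * (Real.pi / 2) * (2 * B + 1) := by
          rw [div_mul_eq_mul_div, div_mul_eq_mul_div, le_div_iff₀ (by positivity)]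
          nlinarith
      _ ≤ _ := mul_le_mul_of_nonneg_right (Real.Wallis.le_W B) (by positivity)
  rw [le_div_iff₀ (mul_pos hπ hB'), ← centralBinomProb_sq_mul_wallis B]
  exact mul_le_mul_of_nonneg_left wallis_ge (sq_nonneg _)

lemma le_centralBinomProb_sq (B : ℕ) :
    1 / (Real.pi * (B + 1 / 2)) ≤ centralBinomProb B ^ 2 := by
  rw [div_le_iff₀ (mul_pos Real.pi_pos (by positivity))]
  calc 1 = centralBinomProb B ^ 2 * (Real.Wallis.W B * (2 * B + 1)) :=
        (centralBinomProb_sq_mul_wallis B).symm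
    _ ≤ centralBinomProb B ^ 2 * (Real.pi / 2 * (2 * B + 1)) := by
        gcongr
        exact Real.Wallis.W_le B
    _ = _ := by ring

lemma exp_neg_add_sq_le_one_sub {y : ℝ} (hy : 0 ≤ y) (hy' : y ≤ 1 / 2) :
    Real.exp (-(y + y ^ 2)) ≤ 1 - y := by
  rw [Real.exp_neg]
  refine inv_le_of_inv_le₀ (by linarith)
    (le_trans ?_ (Real.quadratic_le_exp_of_nonneg (by positivity : 0 ≤ y + y ^ 2)))
  rw [inv_le_iff_one_le_mul₀ (by linarith)]
  nlinarith [mul_nonneg (pow_nonneg hy 2) (sub_nonneg.2 hy'),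
    mul_nonneg (pow_nonneg hy 3) (sub_nonneg.2 hy'),
    mul_nonneg (pow_nonneg hy 4) (sub_nonneg.2 hy')]

lemma exp_mul_choose_le_choose_add_one {b s : ℕ} (hs : 4 * (s + 1) ≤ b) :
    Real.exp (-((2 * s + 1) / b + ((2 * s + 1) / b) ^ 2)) * (2 * b).choose (b + s) ≤
      ((2 * b).choose (b + (s + 1)) : ℝ) := by
  have hb : (0 : ℝ) < b := Nat.cast_pos.2 (by lia)
  have hs' : (4 : ℝ) * (s + 1) ≤ b := by exact_mod_cast hs
  have choose_succ : ((2 * b).choose (b + (s + 1)) : ℝ) * (b + s + 1) =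
      (2 * b).choose (b + s) * (b - s) := by
    rw [← Nat.cast_sub (by lia), show b - s = 2 * b - (b + s) by lia]
    exact_mod_cast (2 * b).choose_succ_right_eq (b + s)
  have ratio_ge : 1 - (2 * s + 1 : ℝ) / b ≤ (b - s) / (b + s + 1) := by
    have hbs : (b : ℝ) ≤ b + s + 1 := by linarith [(Nat.cast_nonneg s : (0 : ℝ) ≤ s)]
    have hdiv : (2 * s + 1 : ℝ) ≤ (2 * s + 1) / b * (b + s + 1) := by
      rw [div_mul_eq_mul_div, le_div_iff₀ hb]
      exact mul_le_mul_of_nonneg_left hbs (by positivity)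
    rw [le_div_iff₀ (hb.trans_le hbs)]
    linarith
  calc _ ≤ (b - s : ℝ) / (b + s + 1) * (2 * b).choose (b + s) := by
        gcongr
        exact (exp_neg_add_sq_le_one_sub (by positivity)
          ((div_le_iff₀ hb).2 (by linarith))).trans ratio_ge
    _ = _ := by
        rw [div_mul_eq_mul_div, mul_comm, ← choose_succ, mul_div_cancel_right₀ _ (by positivity)]

lemma choose_mul_exp_le_choose_add {b s : ℕ} (hs : 4 * s ≤ b) :
    (b.centralBinom : ℝ) * Real.exp (-((s : ℝ) ^ 2 / b + 2 * (s : ℝ) ^ 3 / (b : ℝ) ^ 2)) ≤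
      (2 * b).choose (b + s) := by
  induction s with
  | zero => simp [Nat.centralBinom_eq_two_mul_choose]
  | succ s ih =>
    have hb : (0 : ℝ) < b := Nat.cast_pos.2 (by lia)
    have exponent_le : -(((s + 1 : ℕ) : ℝ) ^ 2 / b + 2 * ((s + 1 : ℕ) : ℝ) ^ 3 / (b : ℝ) ^ 2) ≤
        -((2 * s + 1) / b + ((2 * s + 1 : ℝ) / b) ^ 2) +
          -((s : ℝ) ^ 2 / b + 2 * (s : ℝ) ^ 3 / (b : ℝ) ^ 2) := by
      rw [← sub_nonneg]
      calc (0 : ℝ) ≤ (2 * (s : ℝ) ^ 2 + 2 * s + 1) / (b : ℝ) ^ 2 := by positivity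
        _ = _ := by push_cast; field_simp; ring
    calc _ ≤ (b.centralBinom : ℝ) * (Real.exp (-((2 * s + 1) / b + ((2 * s + 1 : ℝ) / b) ^ 2)) *
          Real.exp (-((s : ℝ) ^ 2 / b + 2 * (s : ℝ) ^ 3 / (b : ℝ) ^ 2))) := by
          rw [← Real.exp_add]
          gcongr
      _ ≤ Real.exp (-((2 * s + 1) / b + ((2 * s + 1 : ℝ) / b) ^ 2)) * (2 * b).choose (b + s) := by
          rw [mul_left_comm]
          gcongr
          exact ih (by lia)
      _ ≤ _ := exp_mul_choose_le_choose_add_one hs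

lemma choose_le_binomWeight (q : ℕ) {b : ℕ} {s : ℤ} (hs : s.natAbs ≤ b) :
    (4 : ℝ)⁻¹ ^ b * (2 * b).choose (b + s.natAbs) ≤ binomWeight q b s := by
  obtain ⟨t, ht⟩ : ∃ t : ℕ, (t : ℤ) = b + s := ⟨(b + s).toNat, by lia⟩
  have ht_le : t ≤ 2 * b := by lia
  have ht_sub : (t - b : ZMod q) = s := by
    rw [← Int.cast_natCast t, ht]
    simp
  have choose_eq : (2 * b).choose (b + s.natAbs) = (2 * b).choose t := by
    rcases le_total 0 s with h | h
    · rw [show b + s.natAbs = t by lia]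
    · rw [← Nat.choose_symm ht_le, show b + s.natAbs = 2 * b - t by lia]
  calc _ = (4 : ℝ)⁻¹ ^ b *
        (((2 * b).choose t : ℝ) * if (t - b : ZMod q) = (s : ZMod q) then 1 else 0) := by
        rw [if_pos ht_sub, mul_one, choose_eq]
    _ ≤ _ := by
        refine mul_le_mul_of_nonneg_left ?_ (by positivity)
        exact single_le_sum (f := fun t : ℕ ↦
          ((2 * b).choose t : ℝ) * if (t - b : ZMod q) = (s : ZMod q) then 1 else 0)
          (fun _ _ ↦ by positivity) (mem_range.2 (by lia))

lemma centralBinomProb_mul_exp_le_binomWeight (q : ℕ) {b : ℕ} {s : ℤ} (hs : 4 * |s| ≤ b) :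
    centralBinomProb b * Real.exp (-(|(s : ℝ)| ^ 2 / b + 2 * |(s : ℝ)| ^ 3 / (b : ℝ) ^ 2)) ≤
      binomWeight q b s := by
  have hs' : 4 * s.natAbs ≤ b := by rwa [Int.abs_eq_natAbs, ← Nat.cast_ofNat, ← Nat.cast_mul,
    Nat.cast_le] at hs
  rw [← Int.cast_abs, ← Nat.cast_natAbs, centralBinomProb, mul_assoc]
  exact (mul_le_mul_of_nonneg_left (choose_mul_exp_le_choose_add hs') (by positivity)).trans
    (choose_le_binomWeight q (by lia))

lemma abs_le_of_sum_sq_le {ι : Type*} [Fintype ι] {x : ι → ℝ} {ρ : ℝ} (hρ : 0 ≤ ρ)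
    (hx : ∑ i, x i ^ 2 ≤ ρ ^ 2) (i : ι) : |x i| ≤ ρ :=
  abs_le_of_sq_le_sq ((single_le_sum (f := fun i ↦ x i ^ 2)
    (fun j _ ↦ sq_nonneg (x j)) (mem_univ i)).trans hx) hρ

lemma centralBinomProb_pow_mul_exp_le_prod_binomWeight (q : ℕ) {N b : ℕ} {s : Fin N → ℤ} {ρ : ℝ}
    (hρ : 0 ≤ ρ) (hs : ∑ i, (s i : ℝ) ^ 2 ≤ ρ ^ 2) (hρb : 4 * ρ ≤ b) :
    centralBinomProb b ^ N * Real.exp (-(ρ ^ 2 / b + 2 * ρ ^ 3 / (b : ℝ) ^ 2)) ≤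
      ∏ i, binomWeight q b (s i) := by
  have abs_le := abs_le_of_sum_sq_le hρ hs
  have four_mul_abs_le (i : Fin N) : 4 * |s i| ≤ b := by
    have : (4 : ℝ) * |(s i : ℝ)| ≤ b := by linarith [abs_le i]
    exact_mod_cast this
  have sum_sq_le : ∑ i, |(s i : ℝ)| ^ 2 ≤ ρ ^ 2 := by simpa only [sq_abs] using hs
  have sum_cube_le : ∑ i, |(s i : ℝ)| ^ 3 ≤ ρ ^ 3 :=
    calc ∑ i, |(s i : ℝ)| ^ 3 ≤ ∑ i, ρ * |(s i : ℝ)| ^ 2 := by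
          refine sum_le_sum fun i _ ↦ ?_
          rw [pow_succ']
          exact mul_le_mul_of_nonneg_right (abs_le i) (by positivity)
      _ ≤ ρ * ρ ^ 2 := by rw [← mul_sum]; exact mul_le_mul_of_nonneg_left sum_sq_le hρ
      _ = ρ ^ 3 := (pow_succ' ρ 2).symm
  calc _ ≤ centralBinomProb b ^ N * Real.exp (∑ i,
        -(|(s i : ℝ)| ^ 2 / b + 2 * |(s i : ℝ)| ^ 3 / (b : ℝ) ^ 2)) := by
        rw [sum_neg_distrib, sum_add_distrib, ← sum_div, ← sum_div, ← mul_sum]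
        gcongr
        exact pow_nonneg (centralBinomProb_pos b).le N
    _ = ∏ i, (centralBinomProb b *
          Real.exp (-(|(s i : ℝ)| ^ 2 / b + 2 * |(s i : ℝ)| ^ 3 / (b : ℝ) ^ 2))) := by
        rw [prod_mul_distrib, prod_const, card_univ, Fintype.card_fin, Real.exp_sum]
    _ ≤ _ := prod_le_prod
        (fun i _ ↦ mul_nonneg (centralBinomProb_pos b).le (Real.exp_pos _).le)
        fun i _ ↦ centralBinomProb_mul_exp_le_binomWeight q (four_mul_abs_le i)

end BinomialWeight

/-! ### Volumes of balls and lattice points in them -/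

section GammaBounds

open Real Set

variable {x : ℝ}

lemma div_exp_one_rpow_self_le_Gamma (hx : 0 ≤ x) : (x / exp 1) ^ x ≤ Gamma (x + 1) := by
  have integrable : IntegrableOn (fun t : ℝ ↦ exp (-t) * t ^ (x + 1 - 1)) (Ioi 0) :=
    GammaIntegral_convergent (by linarith)
  rw [Gamma_eq_integral (by linarith)]
  calc (x / exp 1) ^ x = ∫ t in Ioi x, exp (-t) * x ^ x := by
        rw [integral_mul_const, integral_exp_neg_Ioi, div_rpow hx (exp_pos 1).le, exp_one_rpow,
          exp_neg, inv_mul_eq_div]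
    _ ≤ ∫ t in Ioi x, exp (-t) * t ^ (x + 1 - 1) := by
        refine setIntegral_mono_on ((integrableOn_exp_neg_Ioi x).mul_const _)
          (integrable.mono_set (Ioi_subset_Ioi hx)) measurableSet_Ioi fun t ht ↦ ?_
        rw [add_sub_cancel_right]
        exact mul_le_mul_of_nonneg_left (rpow_le_rpow hx (le_of_lt ht) hx) (exp_pos _).le
    _ ≤ ∫ t in Ioi 0, exp (-t) * t ^ (x + 1 - 1) := by
        refine setIntegral_mono_set integrable ?_ (Ioi_subset_Ioi hx).eventuallyLE
        exact (ae_restrict_iff' measurableSet_Ioi).2 (.of_forall fun t ht ↦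
          mul_nonneg (exp_pos _).le (rpow_nonneg (le_of_lt ht) _))

lemma rpow_le_mul_exp_div {t : ℝ} (hx : 0 < x) (ht : 0 ≤ t) :
    t ^ x ≤ ((x + 1) / exp 1) ^ x * exp (t * x / (x + 1)) := by
  have t_le : t ≤ (x + 1) / exp 1 * exp (t / (x + 1)) := by
    have := add_one_le_exp (t / (x + 1) - 1)
    rw [sub_add_cancel, exp_sub, div_le_iff₀ (by linarith)] at this
    exact this.trans_eq (by ring)
  calc t ^ x ≤ ((x + 1) / exp 1 * exp (t / (x + 1))) ^ x := rpow_le_rpow ht t_le hx.le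
    _ = _ := by
      rw [mul_rpow (by positivity) (exp_pos _).le, ← exp_mul, div_mul_eq_mul_div]

lemma add_one_div_exp_one_rpow_le (hx : 0 < x) :
    ((x + 1) / exp 1) ^ x ≤ exp 1 * (x / exp 1) ^ x :=
  calc ((x + 1) / exp 1) ^ x = (1 / x + 1) ^ x * (x / exp 1) ^ x := by
        rw [← mul_rpow (by positivity) (by positivity)]
        congr 1
        field_simp
        ring
    _ ≤ exp (1 / x) ^ x * (x / exp 1) ^ x := by
        gcongr
        exact add_one_le_exp (1 / x)
    _ = exp 1 * (x / exp 1) ^ x := by rw [← exp_mul, one_div_mul_cancel hx.ne']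

lemma Gamma_le_mul_div_exp_one_rpow_self (hx : 0 < x) :
    Gamma (x + 1) ≤ (x + 1) * exp 1 * (x / exp 1) ^ x := by
  set d : ℝ := 1 / (x + 1) with hd
  have hd_pos : 0 < d := by positivity
  rw [Gamma_eq_integral (by linarith)]
  calc ∫ t in Ioi 0, exp (-t) * t ^ (x + 1 - 1)
      ≤ ∫ t in Ioi 0, exp (-d * t) * ((x + 1) / exp 1) ^ x := by
        refine setIntegral_mono_on (GammaIntegral_convergent (by linarith))
          ((exp_neg_integrableOn_Ioi 0 hd_pos).mul_const _) measurableSet_Ioi fun t ht ↦ ?_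
        rw [add_sub_cancel_right]
        refine (mul_le_mul_of_nonneg_left (rpow_le_mul_exp_div hx (le_of_lt ht))
          (exp_pos _).le).trans_eq ?_
        rw [mul_left_comm, ← exp_add, mul_comm, hd]
        congr 2
        field_simp
        ring
    _ = (x + 1) * ((x + 1) / exp 1) ^ x := by
        rw [integral_mul_const, integral_exp_mul_Ioi (neg_lt_zero.2 hd_pos), hd]
        simp
    _ ≤ (x + 1) * (exp 1 * (x / exp 1) ^ x) := by
        gcongr
        exact add_one_div_exp_one_rpow_le hx
    _ = _ := (mul_assoc _ _ _).symm

end GammaBounds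

section UnitBallVolume

open Real

/-- The volume of the unit ball of `ℝᴺ`; the radius `√(2πe / N)` of the ball of volume
approximately one controls it. -/
def unitBallVolume (N : ℕ) : ℝ := √π ^ N / Gamma ((N : ℝ) / 2 + 1)

lemma unitBallVolume_pos (N : ℕ) : 0 < unitBallVolume N :=
  div_pos (pow_pos (sqrt_pos.2 pi_pos) N) (Gamma_pos_of_pos (by positivity))

lemma volume_closedBall_eq_unitBallVolume {N : ℕ} (hN : 0 < N) {r : ℝ} (hr : 0 ≤ r) :
    volume (Metric.closedBall (0 : EuclideanSpace ℝ (Fin N)) r) =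
      ENNReal.ofReal (unitBallVolume N * r ^ N) := by
  have : Nonempty (Fin N) := ⟨⟨0, hN⟩⟩
  rw [EuclideanSpace.volume_closedBall, Fintype.card_fin, mul_comm,
    ENNReal.ofReal_mul (unitBallVolume_pos N).le, ENNReal.ofReal_pow hr, unitBallVolume]

lemma sqrt_pi_pow_eq {N : ℕ} (hN : 0 < N) :
    √π ^ N = √(2 * π * exp 1 / N) ^ N * ((N : ℝ) / 2 / exp 1) ^ ((N : ℝ) / 2) := by
  have hN' : (N : ℝ) ≠ 0 := Nat.cast_ne_zero.2 hN.ne'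
  have rpow_half : ((N : ℝ) / 2 / exp 1) ^ ((N : ℝ) / 2) = √((N : ℝ) / 2 / exp 1) ^ N := by
    rw [rpow_div_two_eq_sqrt _ (by positivity), rpow_natCast]
  rw [rpow_half, ← mul_pow, ← sqrt_mul (by positivity)]
  congr 2
  field_simp

lemma unitBallVolume_le {N : ℕ} (hN : 0 < N) :
    unitBallVolume N ≤ √(2 * π * exp 1 / N) ^ N := by
  rw [unitBallVolume, div_le_iff₀ (Gamma_pos_of_pos (by positivity)), sqrt_pi_pow_eq hN]
  exact mul_le_mul_of_nonneg_left (div_exp_one_rpow_self_le_Gamma (by positivity)) (by positivity)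

lemma le_mul_unitBallVolume {N : ℕ} (hN : 2 ≤ N) :
    √(2 * π * exp 1 / N) ^ N ≤ exp 1 * N * unitBallVolume N := by
  have hN' : (2 : ℝ) ≤ N := by exact_mod_cast hN
  have gamma_le : Gamma ((N : ℝ) / 2 + 1) ≤
      exp 1 * N * ((N : ℝ) / 2 / exp 1) ^ ((N : ℝ) / 2) := by
    refine (Gamma_le_mul_div_exp_one_rpow_self (by positivity)).trans ?_
    rw [mul_comm _ (exp 1)]
    gcongr
    linarith
  rw [unitBallVolume, ← mul_div_assoc, le_div_iff₀ (Gamma_pos_of_pos (by positivity)),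
    sqrt_pi_pow_eq (by lia), mul_left_comm]
  exact mul_le_mul_of_nonneg_left gamma_le (by positivity)

lemma unitBallVolume_add_two (N : ℕ) :
    unitBallVolume (N + 2) = unitBallVolume N * (π / ((N : ℝ) / 2 + 1)) := by
  have half_add_two : ((N + 2 : ℕ) : ℝ) / 2 + 1 = (N : ℝ) / 2 + 1 + 1 := by push_cast; ring
  rw [unitBallVolume, unitBallVolume, half_add_two, Gamma_add_one (by positivity), pow_add,
    sq_sqrt pi_pos.le, div_mul_div_comm, mul_comm (Gamma _)]

lemma unitBallVolume_add_two_mul_le {N : ℕ} (hN : 0 < N) (M : ℕ) :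
    unitBallVolume (N + 2 * M) ≤ unitBallVolume N * (2 * π / N) ^ M := by
  have hN' : (0 : ℝ) < N := Nat.cast_pos.2 hN
  induction M with
  | zero => simp
  | succ M ih =>
    have factor_le : π / (((N + 2 * M : ℕ) : ℝ) / 2 + 1) ≤ 2 * π / N := by
      rw [div_le_div_iff₀ (by positivity) hN']
      push_cast
      nlinarith [pi_pos, mul_nonneg pi_pos.le (Nat.cast_nonneg M : (0 : ℝ) ≤ M)]
    rw [show N + 2 * (M + 1) = N + 2 * M + 2 by ring, unitBallVolume_add_two, pow_succ, ← mul_assoc]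
    exact mul_le_mul ih factor_le (div_nonneg pi_pos.le (by positivity))
      (mul_nonneg (unitBallVolume_pos N).le (by positivity))

end UnitBallVolume

section LatticePoints

open Finset

variable {N : ℕ}

/-- The unit cube centred at `s`. -/
def centredCube (s : Fin N → ℤ) : Set (EuclideanSpace ℝ (Fin N)) :=
  WithLp.ofLp ⁻¹' Set.univ.pi fun i ↦ Set.Icc ((s i : ℝ) - 1 / 2) (s i + 1 / 2)

lemma volume_centredCube (s : Fin N → ℤ) : volume (centredCube s) = 1 := by
  rw [centredCube, (PiLp.volume_preserving_ofLp (Fin N)).measure_preimage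
    (MeasurableSet.univ_pi fun _ ↦ measurableSet_Icc).nullMeasurableSet, volume_pi_pi]
  refine prod_eq_one fun i _ ↦ ?_
  rw [Real.volume_Icc, add_sub_sub_cancel, add_halves, ENNReal.ofReal_one]

/-- The integer points of Euclidean norm at most `ρ`. -/
def integerPoints (N : ℕ) (ρ : ℝ) : Finset (Fin N → ℤ) :=
  {s ∈ Fintype.piFinset fun _ ↦ Icc (-⌈ρ⌉) ⌈ρ⌉ | ∑ i, (s i : ℝ) ^ 2 ≤ ρ ^ 2}

lemma mem_integerPoints {s : Fin N → ℤ} {ρ : ℝ} (hρ : 0 ≤ ρ) :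
    s ∈ integerPoints N ρ ↔ ∑ i, (s i : ℝ) ^ 2 ≤ ρ ^ 2 := by
  rw [integerPoints, mem_filter, Fintype.mem_piFinset, and_iff_right_iff_imp]
  intro hs i
  have abs_le_ceil : |(s i : ℝ)| ≤ ⌈ρ⌉ := (abs_le_of_sum_sq_le hρ hs i).trans (Int.le_ceil ρ)
  rw [mem_Icc, ← abs_le]
  exact_mod_cast abs_le_ceil

lemma norm_sub_round_le (x : EuclideanSpace ℝ (Fin N)) :
    ‖x - WithLp.toLp 2 fun i ↦ (round (x i) : ℝ)‖ ≤ √N / 2 := by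
  refine le_of_sq_le_sq ?_ (by positivity)
  rw [EuclideanSpace.norm_sq_eq, div_pow, Real.sq_sqrt (Nat.cast_nonneg N)]
  calc _ ≤ ∑ _i : Fin N, (1 / 2 : ℝ) ^ 2 :=
        sum_le_sum fun i _ ↦ pow_le_pow_left₀ (norm_nonneg _) (abs_sub_round (x i)) 2
    _ = N / 2 ^ 2 := by simp [div_eq_mul_inv]

lemma closedBall_subset_iUnion_centredCube {r : ℝ} (hr : 0 ≤ r) :
    Metric.closedBall (0 : EuclideanSpace ℝ (Fin N)) r ⊆
      ⋃ s ∈ integerPoints N (r + √N / 2), centredCube s := by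
  intro x hx
  rw [mem_closedBall_zero_iff] at hx
  have norm_round_le : ‖(WithLp.toLp 2 fun i ↦ (round (x i) : ℝ) : EuclideanSpace ℝ (Fin N))‖ ≤
      r + √N / 2 :=
    (norm_le_norm_add_norm_sub _ _).trans (add_le_add hx (norm_sub_round_le x))
  refine Set.mem_biUnion (x := fun i ↦ round (x i)) ?_ fun i _ ↦ ?_
  · refine (mem_integerPoints (by positivity)).2 ?_
    simpa [EuclideanSpace.norm_sq_eq] using pow_le_pow_left₀ (norm_nonneg _) norm_round_le 2
  · have := abs_le.1 (abs_sub_round (x i))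
    exact ⟨by linarith [this.1], by linarith [this.2]⟩

lemma unitBallVolume_mul_pow_le_card_integerPoints (hN : 0 < N) {r : ℝ} (hr : 0 ≤ r) :
    unitBallVolume N * r ^ N ≤ #(integerPoints N (r + √N / 2)) := by
  rw [← ENNReal.ofReal_le_ofReal_iff (Nat.cast_nonneg _), ENNReal.ofReal_natCast,
    ← volume_closedBall_eq_unitBallVolume hN hr]
  calc _ ≤ ∑ s ∈ integerPoints N (r + √N / 2), volume (centredCube s) :=
        (measure_mono (closedBall_subset_iUnion_centredCube hr)).trans
          (measure_biUnion_finset_le _ _)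
    _ = _ := by simp [volume_centredCube]

lemma exists_finset_card_eq_of_le_unitBallVolume (hN : 0 < N) {r : ℝ} (hr : 0 ≤ r) {T : ℕ}
    (hT : T ≤ unitBallVolume N * r ^ N) :
    ∃ S : Finset (Fin N → ℤ), #S = T ∧ ∀ s ∈ S, ∑ i, (s i : ℝ) ^ 2 ≤ (r + √N / 2) ^ 2 := by
  obtain ⟨S, hS, hS_card⟩ := exists_subset_card_eq
    (Nat.cast_le.1 (hT.trans (unitBallVolume_mul_pow_le_card_integerPoints hN hr)))
  exact ⟨S, hS_card, fun s hs ↦ (mem_integerPoints (by positivity)).1 (hS hs)⟩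

lemma injOn_reduceMod {q : ℕ} {S : Set (Fin N → ℤ)} {ρ : ℝ} (hρ : 0 ≤ ρ) (hq : 2 * ρ < q)
    (hS : ∀ s ∈ S, ∑ i, (s i : ℝ) ^ 2 ≤ ρ ^ 2) : S.InjOn (reduceMod q N) := by
  intro s hs t ht hst
  funext i
  have dvd_sub : (q : ℤ) ∣ t i - s i := by
    rw [← ZMod.intCast_eq_intCast_iff_dvd_sub, ← reduceMod_apply, ← reduceMod_apply, hst]
  have abs_sub_lt : |(t i : ℝ) - s i| < q :=
    calc |(t i : ℝ) - s i| ≤ |(t i : ℝ)| + |(s i : ℝ)| := abs_sub _ _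
      _ ≤ ρ + ρ := add_le_add (abs_le_of_sum_sq_le hρ (hS t ht) i)
        (abs_le_of_sum_sq_le hρ (hS s hs) i)
      _ < q := by linarith
  exact (sub_eq_zero.1 (Int.eq_zero_of_abs_lt_dvd dvd_sub (by exact_mod_cast abs_sub_lt))).symm

end LatticePoints

/-! ### Integer points of a ball satisfy few linear relations -/

section FewRelations

open Finset Real

variable {N b : ℕ} {r ρ : ℝ}

lemma one_div_centralBinomProb_le (B : ℕ) :
    1 / centralBinomProb B ≤ √(π * (B + 1 / 2)) := by
  refine le_sqrt_of_sq_le ?_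
  rw [div_pow, one_pow]
  exact (one_div_le (pow_pos (centralBinomProb_pos B) 2) (by positivity)).2
    (le_centralBinomProb_sq B)

lemma add_half_le_mul_exp (hN : 100 ≤ N) (hr : (N : ℝ) ^ 3 ≤ r)
    (hb : (b : ℝ) ≤ 2 * (r + √N / 2) ^ 2 / N + 1) :
    (b : ℝ) + 1 / 2 ≤ 2 * r ^ 2 / N * exp (2 / N) := by
  have hN' : (100 : ℝ) ≤ N := by exact_mod_cast hN
  have hN₀ : (0 : ℝ) < N := by linarith
  have hr₀ : 0 < r := (pow_pos hN₀ 3).trans_le hr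
  have sqrt_le : √(N : ℝ) ≤ N := sqrt_le_self_iff.2 (Or.inr (by linarith))
  have expand : 2 * (r + √N / 2) ^ 2 / N = 2 * r ^ 2 / N + 2 * (r * √N) / N + 1 / 2 := by
    field_simp
    rw [add_sq, mul_pow, sq_sqrt hN₀.le]
    ring
  have cross_le : 2 * (r * √N) / N ≤ 2 * r := by
    rw [div_le_iff₀ hN₀, mul_assoc]
    gcongr
  have linear_le : 2 * r + 2 ≤ 4 * r ^ 2 / N ^ 2 := by
    have sq_le : (N : ℝ) ^ 2 ≤ r := (pow_le_pow_right₀ (by linarith) (by norm_num)).trans hr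
    have one_le : 1 ≤ r := le_trans (by nlinarith) sq_le
    rw [le_div_iff₀ (pow_pos hN₀ 2)]
    nlinarith
  calc (b : ℝ) + 1 / 2 ≤ 2 * r ^ 2 / N + 4 * r ^ 2 / N ^ 2 := by linarith
    _ = 2 * r ^ 2 / N * (2 / N + 1) := by field_simp; ring
    _ ≤ _ := by
      gcongr
      exact add_one_le_exp _

lemma sqrt_exp_one_mul_pow_le (hN : 100 ≤ N) (hr : (N : ℝ) ^ 3 ≤ r)
    (hb : (b : ℝ) ≤ 2 * (r + √N / 2) ^ 2 / N + 1) :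
    √(exp 1 * (π * (b + 1 / 2))) ^ N ≤ √(2 * π * exp 1 / N) ^ N * r ^ N * exp 1 := by
  have hN₀ : (0 : ℝ) < N := Nat.cast_pos.2 (by lia)
  have hr₀ : 0 < r := (pow_pos hN₀ 3).trans_le hr
  have sqrt_le : √(exp 1 * (π * (b + 1 / 2))) ≤ √(2 * π * exp 1 / N) * r * exp (1 / N) := by
    rw [sqrt_le_left (by positivity), mul_pow, mul_pow, sq_sqrt (by positivity), ← exp_nat_mul,
      Nat.cast_two, mul_one_div]
    calc exp 1 * (π * (b + 1 / 2)) ≤ exp 1 * (π * (2 * r ^ 2 / N * exp (2 / N))) := by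
          gcongr
          exact add_half_le_mul_exp hN hr hb
      _ = _ := by ring
  calc _ ≤ (√(2 * π * exp 1 / N) * r * exp (1 / N)) ^ N := by gcongr
    _ = _ := by rw [mul_pow, mul_pow, ← exp_nat_mul, mul_one_div_cancel hN₀.ne']

lemma exp_div_centralBinomProb_pow_le (hN : 100 ≤ N) (hr : (N : ℝ) ^ 3 ≤ r)
    (hb : (b : ℝ) ≤ 2 * (r + √N / 2) ^ 2 / N + 1) :
    exp (N / 2 + 1) / centralBinomProb b ^ N ≤ (N : ℝ) ^ 2 * (unitBallVolume N * r ^ N) := by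
  have hN' : (100 : ℝ) ≤ N := by exact_mod_cast hN
  have hr₀ : 0 < r := lt_of_lt_of_le (by positivity) hr
  have hvol := unitBallVolume_pos N
  have hcb := centralBinomProb_pos b
  have exp_eq : exp (N / 2 + 1) = exp 1 * √(exp 1) ^ N := by
    rw [← exp_half, ← exp_nat_mul, ← exp_add]
    ring_nf
  have exp_cube_le : exp 1 ^ 3 ≤ (N : ℝ) :=
    calc exp 1 ^ 3 ≤ 3 ^ 3 := by gcongr; linarith [exp_one_lt_d9]
      _ ≤ (N : ℝ) := by linarith
  calc exp (N / 2 + 1) / centralBinomProb b ^ N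
      = exp 1 * √(exp 1) ^ N * (1 / centralBinomProb b) ^ N := by
        rw [exp_eq, div_pow, one_pow, mul_one_div]
    _ ≤ exp 1 * √(exp 1) ^ N * √(π * (b + 1 / 2)) ^ N := by
        gcongr
        exact one_div_centralBinomProb_le b
    _ = exp 1 * √(exp 1 * (π * (b + 1 / 2))) ^ N := by
        rw [mul_assoc, ← mul_pow, ← sqrt_mul (exp_pos 1).le]
    _ ≤ exp 1 * (√(2 * π * exp 1 / N) ^ N * r ^ N * exp 1) := by
        gcongr
        exact sqrt_exp_one_mul_pow_le hN hr hb
    _ ≤ exp 1 * (exp 1 * N * unitBallVolume N * r ^ N * exp 1) := by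
        gcongr
        exact le_mul_unitBallVolume (by lia)
    _ = exp 1 ^ 3 * (N * (unitBallVolume N * r ^ N)) := by ring
    _ ≤ N * (N * (unitBallVolume N * r ^ N)) := by gcongr
    _ = _ := by ring

lemma unitBallVolume_mul_pow_mul_centralBinomProb_pow_le (hN : 0 < N) (hr : 0 < r)
    (hb : 2 * r ^ 2 / N ≤ b) (i : ℕ) :
    unitBallVolume N * r ^ N * centralBinomProb (b * (i + 1)) ^ N ≤ √(exp 1 / (i + 1)) ^ N := by
  have hb₀ : (0 : ℝ) < b := lt_of_lt_of_le (by positivity) hb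
  have prob_le : centralBinomProb (b * (i + 1)) ≤ √(1 / (π * (b * (i + 1)))) := by
    refine le_sqrt_of_sq_le ?_
    exact_mod_cast centralBinomProb_sq_le (Nat.mul_pos (Nat.cast_pos.1 hb₀) i.succ_pos)
  have base_le : √(2 * π * exp 1 / N) * r * √(1 / (π * (b * (i + 1)))) ≤ √(exp 1 / (i + 1)) := by
    refine le_sqrt_of_sq_le ?_
    rw [mul_pow, mul_pow, sq_sqrt (by positivity), sq_sqrt (by positivity)]
    calc 2 * π * exp 1 / N * r ^ 2 * (1 / (π * (b * (i + 1))))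
        = 2 * r ^ 2 / N / b * (exp 1 / (i + 1)) := by field_simp
      _ ≤ exp 1 / (i + 1) := mul_le_of_le_one_left (by positivity) ((div_le_one hb₀).2 hb)
  have := (centralBinomProb_pos (b * (i + 1))).le
  calc _ ≤ √(2 * π * exp 1 / N) ^ N * r ^ N * √(1 / (π * (b * (i + 1)))) ^ N := by
        gcongr
        exact unitBallVolume_le hN
    _ = (√(2 * π * exp 1 / N) * r * √(1 / (π * (b * (i + 1))))) ^ N := by rw [mul_pow, mul_pow]
    _ ≤ _ := by gcongr

lemma sq_div_add_two_mul_cube_div_le (hN : 0 < N) (hρ : (N : ℝ) ^ 2 ≤ ρ)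
    (hb : 2 * ρ ^ 2 / N ≤ b) : ρ ^ 2 / b + 2 * ρ ^ 3 / (b : ℝ) ^ 2 ≤ N / 2 + 1 := by
  have hN' : (0 : ℝ) < N := Nat.cast_pos.2 hN
  have hρ₀ : 0 < ρ := (pow_pos hN' 2).trans_le hρ
  have hb₀ : (0 : ℝ) < b := lt_of_lt_of_le (by positivity) hb
  refine add_le_add ?_ ?_
  · rw [div_le_iff₀ hN'] at hb
    rw [div_le_iff₀ hb₀]
    linarith
  · rw [div_le_one (pow_pos hb₀ 2)]
    refine le_trans ?_ (pow_le_pow_left₀ (by positivity) hb 2)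
    rw [div_pow, le_div_iff₀ (pow_pos hN' 2)]
    calc 2 * ρ ^ 3 * N ^ 2 ≤ 2 * ρ ^ 3 * ρ := by gcongr
      _ ≤ (2 * ρ ^ 2) ^ 2 := by nlinarith [pow_pos hρ₀ 4]

lemma one_le_mul_prod_binomWeight (q : ℕ) (hN : 0 < N) (hρ : (N : ℝ) ^ 2 ≤ ρ) (hNρ : 2 * N ≤ ρ)
    (hb : 2 * ρ ^ 2 / N ≤ b) {s : Fin N → ℤ} (hs : ∑ i, (s i : ℝ) ^ 2 ≤ ρ ^ 2) :
    1 ≤ exp (N / 2 + 1) / centralBinomProb b ^ N * ∏ i, binomWeight q b (s i) := by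
  have hN' : (0 : ℝ) < N := Nat.cast_pos.2 hN
  have hρ₀ : 0 < ρ := (pow_pos hN' 2).trans_le hρ
  have hcb := pow_pos (centralBinomProb_pos b) N
  have four_mul_le : 4 * ρ ≤ b := by
    refine le_trans ?_ hb
    rw [le_div_iff₀ hN']
    nlinarith
  calc 1 ≤ exp (N / 2 + 1 + -(ρ ^ 2 / b + 2 * ρ ^ 3 / (b : ℝ) ^ 2)) :=
        one_le_exp (by linarith [sq_div_add_two_mul_cube_div_le hN hρ hb])
    _ = exp (N / 2 + 1) / centralBinomProb b ^ N *
          (centralBinomProb b ^ N * exp (-(ρ ^ 2 / b + 2 * ρ ^ 3 / (b : ℝ) ^ 2))) := by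
        rw [exp_add, ← mul_assoc, div_mul_cancel₀ _ hcb.ne']
    _ ≤ _ := by
        gcongr
        exact centralBinomProb_pow_mul_exp_le_prod_binomWeight q hρ₀.le hs four_mul_le

lemma add_sqrt_div_two_le (hN : 1 ≤ N) (hr : r ≤ 2 * (N : ℝ) ^ 3) :
    r + √N / 2 ≤ 3 * (N : ℝ) ^ 3 := by
  have one_le : (1 : ℝ) ≤ N := by exact_mod_cast hN
  linarith [sqrt_le_self_iff.2 (Or.inr one_le), le_self_pow₀ one_le three_ne_zero]

lemma ceil_two_mul_sq_div_mul_le (hN : 100 ≤ N) (hρ : 0 ≤ ρ) (hρN : ρ ≤ 3 * (N : ℝ) ^ 3) {m : ℕ}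
    (hm : 50 * m ≤ N) : ⌈2 * ρ ^ 2 / N⌉₊ * m ≤ N ^ 7 := by
  have hN' : (100 : ℝ) ≤ N := by exact_mod_cast hN
  have hN₀ : (0 : ℝ) < N := by linarith
  have hm' : (m : ℝ) ≤ N / 50 := by
    have : (50 : ℝ) * m ≤ N := by exact_mod_cast hm
    linarith
  have quotient_le : 2 * ρ ^ 2 / N ≤ 18 * (N : ℝ) ^ 5 := by
    rw [div_le_iff₀ hN₀]
    calc 2 * ρ ^ 2 ≤ 2 * (3 * (N : ℝ) ^ 3) ^ 2 := by gcongr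
      _ = _ := by ring
  have ceil_le : (⌈2 * ρ ^ 2 / N⌉₊ : ℝ) ≤ 19 * (N : ℝ) ^ 5 := by
    linarith [Nat.ceil_lt_add_one (by positivity : 0 ≤ 2 * ρ ^ 2 / N),
      one_le_pow₀ (by linarith : (1 : ℝ) ≤ N) (n := 5)]
  have : (⌈2 * ρ ^ 2 / N⌉₊ : ℝ) * m ≤ (N : ℝ) ^ 7 :=
    calc (⌈2 * ρ ^ 2 / N⌉₊ : ℝ) * m ≤ 19 * (N : ℝ) ^ 5 * (N / 50) := by gcongr
      _ ≤ (N : ℝ) ^ 6 := by nlinarith [pow_pos hN₀ 6]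
      _ ≤ (N : ℝ) ^ 7 := pow_le_pow_right₀ (by linarith) (by norm_num)
  exact_mod_cast this

lemma pow_mul_pow_succ_mul_le {x Q A T c δ : ℝ} (hx : 1 ≤ x) (hQ : 0 ≤ Q) (hQx : Q ≤ x ^ 8)
    (hA : 0 ≤ A) (hAT : A ≤ x ^ 2 * T) (hT : 0 ≤ T) (hc : 0 ≤ c) (hTc : T * c ≤ δ) {i : ℕ}
    (hi : 2 ≤ i) : Q ^ i * (A ^ (i + 1) * c) ≤ x ^ (11 * i) * δ * T ^ i :=
  calc Q ^ i * (A ^ (i + 1) * c) ≤ (x ^ 8) ^ i * ((x ^ 2 * T) ^ (i + 1) * c) := by gcongr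
    _ = x ^ (8 * i + 2 * (i + 1)) * (T * c) * T ^ i := by
        rw [mul_pow, ← pow_mul, ← pow_mul, pow_add, pow_succ T]
        ring
    _ ≤ x ^ (11 * i) * δ * T ^ i := by
        gcongr
        lia

-- Binomial weights with parameter `b ≈ 2ρ² / N` are, on the ball of radius `ρ`, at least the
-- reciprocal of its volume up to a polynomial factor.
lemma fewRelations_image_reduceMod {q L : ℕ} [Fact q.Prime] (hN : 100 ≤ N)
    (hL : 100 * L ≤ N) {η : ℝ} (hr : (N : ℝ) ^ 3 ≤ r) (hr' : r ≤ 2 * (N : ℝ) ^ 3)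
    (hq : N ^ 7 < q) (hq' : q ≤ N ^ 8) {S : Finset (Fin N → ℤ)}
    (hS_card : (#S : ℝ) = unitBallVolume N * r ^ N)
    (hS : ∀ s ∈ S, ∑ i, (s i : ℝ) ^ 2 ≤ (r + √N / 2) ^ 2)
    (hS_inj : Set.InjOn (reduceMod q N) S)
    (hη : ∀ i : ℕ, 2 ≤ i → i ≤ L → (N : ℝ) ^ (11 * i) * √(exp 1 / (i + 1)) ^ N ≤ η) :
    FewRelations (ZMod q) (S.image (reduceMod q N)) η L := by
  have hN' : (100 : ℝ) ≤ N := by exact_mod_cast hN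
  have hN₀ : (0 : ℝ) < N := by linarith
  have hr₀ : 0 < r := (pow_pos hN₀ 3).trans_le hr
  set ρ := r + √N / 2
  have hrρ : r ≤ ρ := le_add_of_nonneg_right (by positivity)
  have sq_le : (N : ℝ) ^ 2 ≤ ρ :=
    ((pow_le_pow_right₀ (by linarith) (by norm_num)).trans hr).trans hrρ
  have ρ_le : ρ ≤ 3 * (N : ℝ) ^ 3 := add_sqrt_div_two_le (by lia) hr'
  set b : ℕ := ⌈2 * ρ ^ 2 / N⌉₊
  have le_b : 2 * ρ ^ 2 / N ≤ b := Nat.le_ceil _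
  have b_le : (b : ℝ) ≤ 2 * ρ ^ 2 / N + 1 := (Nat.ceil_lt_add_one (by positivity)).le
  set A : ℝ := exp (N / 2 + 1) / centralBinomProb b ^ N
  have A_nonneg : 0 ≤ A := div_nonneg (exp_pos _).le (pow_pos (centralBinomProb_pos b) N).le
  have A_le : A ≤ (N : ℝ) ^ 2 * #S := hS_card ▸ exp_div_centralBinomProb_pow_le hN hr b_le
  have hA : ∀ s ∈ S.image (reduceMod q N), 1 ≤ A * ∏ c, binomWeight q b (s c) :=
    forall_mem_image.2 fun s hs ↦
      one_le_mul_prod_binomWeight q (by lia) sq_le (by nlinarith) le_b (hS s hs)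
  intro κ _ μ hμ hκ hκL
  set i := Fintype.card κ
  have b_mul_lt : b * (i + 1) < q :=
    (ceil_two_mul_sq_div_mul_le hN (hr₀.le.trans hrρ) ρ_le (by lia)).trans_lt hq
  have hcb := (centralBinomProb_pos (b * (i + 1))).le
  have card_mul_le : #S * centralBinomProb (b * (i + 1)) ^ N ≤ √(exp 1 / (i + 1)) ^ N := by
    rw [hS_card]
    exact unitBallVolume_mul_pow_mul_centralBinomProb_pow_le (by lia) hr₀
      (le_trans (by gcongr) le_b) i
  rw [card_image_of_injOn hS_inj, ZMod.card]
  calc (q : ℝ) ^ i * #(relations (S.image (reduceMod q N)) μ)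
      ≤ (q : ℝ) ^ i * (A ^ (i + 1) * centralBinomProb (b * (i + 1)) ^ N) := by
        gcongr
        exact card_relations_le A_nonneg hA hμ b_mul_lt
    _ ≤ (N : ℝ) ^ (11 * i) * √(exp 1 / (i + 1)) ^ N * #S ^ i :=
        pow_mul_pow_succ_mul_le (by linarith) (Nat.cast_nonneg q) (by exact_mod_cast hq')
          A_nonneg A_le (Nat.cast_nonneg _) (pow_nonneg hcb N) card_mul_le hκ
    _ ≤ η * #S ^ i := by
        gcongr
        exact hη i hκ hκL

end FewRelations

/-! ### The density of the constructed covering -/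

section Density

open Finset Real

variable {N M n : ℕ} {r s : ℝ}

lemma coveringRadius_le (hN : 0 < N) (hr : 0 < r) (hs : s ^ 2 = 3 * r ^ 2 / (2 * N)) :
    √((√N / 2 + (r + √N / 2)) ^ 2 + 4 / 3 * s ^ 2 * M) ≤ r * exp (√N / r + M / N) := by
  set x := √N / r with hx
  set y : ℝ := 2 * (M / N) with hy
  have hx₀ : 0 ≤ x := by positivity
  have hy₀ : 0 ≤ y := by positivity
  have factor : (√N / 2 + (r + √N / 2)) ^ 2 + 4 / 3 * s ^ 2 * M = r ^ 2 * ((x + 1) ^ 2 + y) := by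
    rw [hs, hx, hy]
    field_simp
    ring
  have add_le : (x + 1) ^ 2 + y ≤ exp x ^ 2 * exp y :=
    calc (x + 1) ^ 2 + y ≤ (x + 1) ^ 2 * (y + 1) := by nlinarith [mul_nonneg hx₀ hy₀]
      _ ≤ exp x ^ 2 * exp y := by gcongr <;> exact add_one_le_exp _
  rw [sqrt_le_left (by positivity), factor, mul_pow, exp_add, mul_pow, ← exp_nat_mul (M / N)]
  gcongr
  exact_mod_cast add_le

lemma coveringDensity_le_mul_exp (hn : N + 2 * M = n) (hN : 0 < N) (hr : 0 < r)
    (hs : s ^ 2 = 3 * r ^ 2 / (2 * N)) {v Q : ℝ} (hQ : 0 < Q)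
    (hv : v * Q = unitBallVolume N * r ^ N) {b : Fin n → EuclideanSpace ℝ (Fin n)}
    (hb : latticeDet b = Q * (s ^ 2 * √3 / 2) ^ M) :
    coveringDensity b √((√N / 2 + (r + √N / 2)) ^ 2 + 4 / 3 * s ^ 2 * M) ≤
      v * (8 * π / (3 * √3)) ^ M * exp (n * (√N / r + M / N)) := by
  have hs₀ : 0 < s ^ 2 := hs ▸ by positivity
  have hvol := unitBallVolume_pos n
  have hvolN := unitBallVolume_pos N
  have hexagon : 2 * π / N * r ^ 2 = 8 * π / (3 * √3) * (s ^ 2 * √3 / 2) := by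
    rw [hs]
    field_simp
    norm_num
  rw [coveringDensity, volume_closedBall_eq_unitBallVolume (by lia) (sqrt_nonneg _),
    ENNReal.toReal_ofReal (by positivity), hb, div_le_iff₀ (by positivity)]
  calc _ ≤ unitBallVolume N * (2 * π / N) ^ M * (r * exp (√N / r + M / N)) ^ n := by
        gcongr
        · exact hn ▸ unitBallVolume_add_two_mul_le hN M
        · exact coveringRadius_le hN hr hs
    _ = unitBallVolume N * r ^ N * (2 * π / N * r ^ 2) ^ M * exp (n * (√N / r + M / N)) := by
        rw [mul_pow r, ← exp_nat_mul, mul_pow _ (r ^ 2), ← pow_mul, ← hn, pow_add r]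
        ring
    _ = _ := by
        rw [← hv, hexagon, mul_pow]
        ring

lemma mul_sqrt_div_add_div_le (hn : N + 2 * M = n) (hN : 2 ≤ N) (hMN : 2 * M ^ 2 ≤ N)
    (hr : (N : ℝ) ^ 3 ≤ r) : n * (√N / r + M / N) ≤ 2 + M := by
  have hN' : (2 : ℝ) ≤ N := by exact_mod_cast hN
  have hN₀ : (0 : ℝ) < N := by linarith
  have hMN' : 2 * (M : ℝ) ^ 2 ≤ N := by exact_mod_cast hMN
  have hn' : (n : ℝ) = N + 2 * M := by exact_mod_cast hn.symm
  have n_le : (n : ℝ) ≤ 2 * N := by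
    have : 2 * M ≤ N := (Nat.mul_le_mul_left 2 (Nat.le_self_pow two_ne_zero M)).trans hMN
    exact_mod_cast (by lia : n ≤ 2 * N)
  have sqrt_term : n * (√N / r) ≤ 1 := by
    rw [← mul_div_assoc, div_le_one ((pow_pos hN₀ 3).trans_le hr)]
    calc n * √N ≤ 2 * N * N := by
          gcongr
          exact sqrt_le_self_iff.2 (Or.inr (by linarith))
      _ ≤ N * N * N := by gcongr
      _ = (N : ℝ) ^ 3 := by ring
      _ ≤ r := hr
  have linear_term : n * (M / N : ℝ) ≤ M + 1 := by
    rw [← mul_div_assoc, div_le_iff₀ hN₀, hn']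
    nlinarith
  linarith

lemma coveringDensity_le_mul_pow (hn : N + 2 * M = n) (hN : 2 ≤ N) (hMN : 2 * M ^ 2 ≤ N)
    (hr : (N : ℝ) ^ 3 ≤ r) (hs : s ^ 2 = 3 * r ^ 2 / (2 * N)) {v : ℕ} (hvN : 9 * v ≤ N) {Q : ℝ}
    (hQ : 0 < Q) (hv : v * Q = unitBallVolume N * r ^ N) {b : Fin n → EuclideanSpace ℝ (Fin n)}
    (hb : latticeDet b = Q * (s ^ 2 * √3 / 2) ^ M) :
    coveringDensity b √((√N / 2 + (r + √N / 2)) ^ 2 + 4 / 3 * s ^ 2 * M) ≤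
      n * (8 * π * exp 1 / (3 * √3)) ^ M := by
  have hr₀ : 0 < r := (pow_pos (Nat.cast_pos.2 (by lia)) 3).trans_le hr
  have mul_exp_le : v * exp 2 ≤ n :=
    calc v * exp 2 = v * exp 1 ^ 2 := by rw [← exp_nat_mul, Nat.cast_two, mul_one]
      _ ≤ v * 3 ^ 2 := by gcongr; exact exp_one_lt_three.le
      _ ≤ n := by exact_mod_cast (by lia : v * 3 ^ 2 ≤ n)
  calc _ ≤ v * (8 * π / (3 * √3)) ^ M * exp (n * (√N / r + M / N)) :=
        coveringDensity_le_mul_exp hn (by lia) hr₀ hs hQ hv hb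
    _ ≤ v * (8 * π / (3 * √3)) ^ M * exp (2 + M) := by
        gcongr
        exact mul_sqrt_div_add_div_le hn hN hMN hr
    _ = v * exp 2 * (8 * π / (3 * √3) * exp 1) ^ M := by
        rw [exp_add, mul_pow, ← exp_nat_mul, mul_one]
        ring
    _ ≤ n * (8 * π / (3 * √3) * exp 1) ^ M := by gcongr
    _ = _ := by rw [div_mul_eq_mul_div]

end Density

/-! ### Choice of the parameters -/

section Parameters

open Finset Real

variable {N M n k q v : ℕ} {r : ℝ}

lemma natCast_pow_eq_exp_mul_log (hN : 0 < N) (m : ℕ) : (N : ℝ) ^ m = exp (m * log N) := by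
  rw [exp_nat_mul, exp_log (Nat.cast_pos.2 hN)]

lemma pow_two_mul_le_mul_unitBallVolume (hN : 2 ≤ N) :
    (N : ℝ) ^ (2 * N) ≤ exp 1 * N * (unitBallVolume N * ((N : ℝ) ^ 3) ^ N) := by
  have hN₀ : (0 : ℝ) < N := Nat.cast_pos.2 (by lia)
  have inv_le : (N : ℝ)⁻¹ ≤ √(2 * π * exp 1 / N) := by
    refine le_sqrt_of_sq_le ?_
    rw [inv_pow, le_div_iff₀ hN₀, sq, mul_inv, mul_assoc, inv_mul_cancel₀ hN₀.ne', mul_one]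
    calc (N : ℝ)⁻¹ ≤ 1 := Nat.cast_inv_le_one N
      _ ≤ 2 * π * exp 1 := by nlinarith [pi_gt_three, one_lt_exp_iff.2 one_pos]
  calc (N : ℝ) ^ (2 * N) = (N : ℝ)⁻¹ ^ N * ((N : ℝ) ^ 3) ^ N := by
        rw [← mul_pow, pow_mul]
        congr 1
        field_simp
    _ ≤ √(2 * π * exp 1 / N) ^ N * ((N : ℝ) ^ 3) ^ N := by gcongr
    _ ≤ exp 1 * N * unitBallVolume N * ((N : ℝ) ^ 3) ^ N := by
        gcongr
        exact le_mul_unitBallVolume hN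
    _ = _ := by ring

lemma exp_two_mul_le_pow (hN : 9 ≤ N) : exp (2 * N) ≤ (N : ℝ) ^ N := by
  have exp_two_le : exp 2 ≤ N :=
    calc exp 2 = exp 1 ^ 2 := by rw [← exp_nat_mul, Nat.cast_two, mul_one]
      _ ≤ 3 ^ 2 := by gcongr; exact exp_one_lt_three.le
      _ ≤ (N : ℝ) := by exact_mod_cast hN
  rw [mul_comm, exp_nat_mul]
  gcongr

lemma mul_exp_le_unitBallVolume_mul_pow (hN : 60 ≤ N) :
    20 * (N : ℝ) ^ 2 * exp (2 * N) ≤ unitBallVolume N * ((N : ℝ) ^ 3) ^ N := by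
  have hN₀ : (0 : ℝ) < N := Nat.cast_pos.2 (by lia)
  have sixty_mul_le : 60 * (N : ℝ) ^ 3 ≤ (N : ℝ) ^ N :=
    calc 60 * (N : ℝ) ^ 3 ≤ N * (N : ℝ) ^ 3 := by gcongr; exact_mod_cast hN
      _ = (N : ℝ) ^ 4 := by ring
      _ ≤ (N : ℝ) ^ N := pow_le_pow_right₀ (by exact_mod_cast (by lia : 1 ≤ N)) (by lia)
  have hvol := unitBallVolume_pos N
  refine le_of_mul_le_mul_left ?_ (mul_pos three_pos hN₀)
  calc 3 * N * (20 * (N : ℝ) ^ 2 * exp (2 * N)) = 60 * (N : ℝ) ^ 3 * exp (2 * N) := by ring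
    _ ≤ (N : ℝ) ^ N * (N : ℝ) ^ N := by gcongr; exact exp_two_mul_le_pow (by lia)
    _ = (N : ℝ) ^ (2 * N) := by rw [two_mul, pow_add]
    _ ≤ exp 1 * N * (unitBallVolume N * ((N : ℝ) ^ 3) ^ N) :=
        pow_two_mul_le_mul_unitBallVolume (by lia)
    _ ≤ 3 * N * (unitBallVolume N * ((N : ℝ) ^ 3) ^ N) := by
        gcongr
        exact exp_one_lt_three.le

lemma exists_mul_pow_eq_unitBallVolume_mul_pow (hN : 0 < N) {R : ℝ} (hR : 0 < R) (hq : 1 < q)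
    (hqN : q ≤ 2 ^ N) (hv : 0 < v) (hvR : v ≤ unitBallVolume N * R ^ N) :
    ∃ (k : ℕ) (r : ℝ), R ≤ r ∧ r ≤ 2 * R ∧ v * (q : ℝ) ^ k = unitBallVolume N * r ^ N := by
  have hvol := unitBallVolume_pos N
  have hv' : (0 : ℝ) < v := Nat.cast_pos.2 hv
  have hq' : (1 : ℝ) < q := by exact_mod_cast hq
  set X := unitBallVolume N * R ^ N
  have one_le : 1 ≤ X / v := (one_le_div hv').2 hvR
  obtain ⟨k, hk_le, hk_lt⟩ := exists_nat_pow_near (by nlinarith : 1 ≤ q * (X / v)) hq'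
  have le_mul : X ≤ v * (q : ℝ) ^ k := by
    rw [pow_succ', mul_lt_mul_iff_of_pos_left (by linarith), div_lt_iff₀' hv'] at hk_lt
    exact hk_lt.le
  have mul_le : v * (q : ℝ) ^ k ≤ q * X := by
    rwa [← mul_div_assoc, le_div_iff₀' hv'] at hk_le
  refine ⟨k, (v * (q : ℝ) ^ k / unitBallVolume N) ^ (N : ℝ)⁻¹, ?_, ?_, ?_⟩
  · rw [Real.le_rpow_inv_iff_of_pos hR.le (by positivity) (by positivity), rpow_natCast,
      le_div_iff₀' hvol]
    exact le_mul
  · rw [Real.rpow_inv_le_iff_of_pos (by positivity) (by positivity) (by positivity), rpow_natCast,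
      div_le_iff₀' hvol]
    calc v * (q : ℝ) ^ k ≤ q * X := mul_le
      _ ≤ 2 ^ N * X := by gcongr; exact_mod_cast hqN
      _ = unitBallVolume N * (2 * R) ^ N := by rw [mul_pow]; ring
  · rw [rpow_inv_natCast_pow (by positivity) hN.ne', mul_div_cancel₀ _ hvol.ne']

lemma unitBallVolume_le_one (hN : 24 ≤ N) : unitBallVolume N ≤ 1 := by
  refine (unitBallVolume_le (by lia)).trans (pow_le_one₀ (sqrt_nonneg _) ?_)
  have : (24 : ℝ) ≤ N := by exact_mod_cast hN
  rw [sqrt_le_one, div_le_one (by linarith)]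
  nlinarith [pi_pos, pi_le_four, exp_one_lt_three]

lemma pow_le_exp_mul_log (hN : 24 ≤ N) (hv : 0 < v) (hr : 0 ≤ r) (hr' : r ≤ 2 * (N : ℝ) ^ 3)
    {Q : ℝ} (hQ : 0 ≤ Q) (hvQ : v * Q = unitBallVolume N * r ^ N) : Q ≤ exp (4 * N * log N) := by
  have two_le : (2 : ℝ) ≤ N := by exact_mod_cast (by lia : 2 ≤ N)
  calc Q ≤ v * Q := le_mul_of_one_le_left hQ (by exact_mod_cast hv)
    _ = unitBallVolume N * r ^ N := hvQ
    _ ≤ 1 * (N * (N : ℝ) ^ 3) ^ N := by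
        gcongr
        · exact unitBallVolume_le_one hN
        · exact hr'.trans (by gcongr)
    _ = (N : ℝ) ^ (4 * N) := by rw [one_mul, ← pow_succ', ← pow_mul]
    _ = _ := by rw [natCast_pow_eq_exp_mul_log (by lia)]; push_cast; rfl

lemma pow_four_pow_mul_lt {K v Q T : ℝ} (hK : 1 ≤ K) (hKv : 4 * K ≤ exp (v / 2))
    (hQ : 0 ≤ Q) (hQT : Q ≤ exp T) (hT : T < v / 2 * 4 ^ M) :
    (K * (4 * exp (-v))) ^ 4 ^ M * Q < K := by
  have base_le : K * (4 * exp (-v)) ≤ exp (-(v / 2)) :=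
    calc K * (4 * exp (-v)) = 4 * K * exp (-v) := by ring
      _ ≤ exp (v / 2) * exp (-v) := by gcongr
      _ = exp (-(v / 2)) := by rw [← exp_add]; ring_nf
  calc _ ≤ exp (-(v / 2)) ^ 4 ^ M * exp T := by gcongr
    _ = exp (T - v / 2 * 4 ^ M) := by
        rw [← exp_nat_mul, ← exp_add]
        push_cast
        ring_nf
    _ < 1 := exp_lt_one_iff.2 (by linarith)
    _ ≤ K := hK

lemma pow_eight_le_two_pow (hN : 0 < N) (hlog : 440 * log N ≤ √N) : N ^ 8 ≤ 2 ^ N := by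
  have one_le : (1 : ℝ) ≤ N := by exact_mod_cast hN
  have sqrt_le : √(N : ℝ) ≤ N := sqrt_le_self_iff.2 (Or.inr one_le)
  have : (N : ℝ) ^ 8 ≤ 2 ^ N := by
    rw [natCast_pow_eq_exp_mul_log hN, ← exp_log (pow_pos two_pos N : (0 : ℝ) < 2 ^ N), log_pow]
    refine exp_le_exp.2 ?_
    push_cast
    nlinarith [log_two_gt_d9]
  exact_mod_cast this

lemma mul_log_add_mul_le_of_le_sqrt {N i : ℝ} (hN : 1 ≤ N) (hlog : 440 * log N ≤ √N) (hi : 2 ≤ i)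
    (hiN : i ≤ √N) : 11 * i * log N + N / 2 * (1 - log (i + 1)) ≤ -(N / 200) := by
  have log_term : i * log N ≤ N / 440 :=
    calc i * log N ≤ √N * (√N / 440) :=
          mul_le_mul hiN (by linarith) (log_nonneg hN) (sqrt_nonneg N)
      _ = N / 440 := by rw [← mul_div_assoc, mul_self_sqrt (by linarith)]
  have log_three_le : log 3 ≤ log (i + 1) := log_le_log (by norm_num) (by linarith)
  nlinarith [log_three_gt_d9]

lemma mul_log_add_mul_le_of_sqrt_le {N i : ℝ} (hN : 0 < N) (hlog : 4 ≤ log N) (hi : √N ≤ i)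
    (hiN : i ≤ N / 125) : 11 * i * log N + N / 2 * (1 - log (i + 1)) ≤ -(N / 200) := by
  have log_le : log N / 2 ≤ log (i + 1) := by
    rw [← log_sqrt hN.le]
    exact log_le_log (sqrt_pos.2 hN) (by linarith)
  have log_term : i * log N ≤ N / 125 * log N := by gcongr
  have log_add_one_term : N / 2 * (1 - log (i + 1)) ≤ N / 2 * (1 - log N / 2) := by gcongr
  nlinarith

lemma pow_mul_sqrt_pow_le_exp_neg (hN : 1000 ≤ N) (hlog : 440 * log N ≤ √N) {i : ℕ} (hi : 2 ≤ i)
    (hiN : i ≤ 8 * (N / 1000)) :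
    (N : ℝ) ^ (11 * i) * √(exp 1 / (i + 1)) ^ N ≤ exp (-(5 * (N / 1000 : ℕ))) := by
  have hN' : (1000 : ℝ) ≤ N := by exact_mod_cast hN
  have sqrt_eq : √(exp 1 / (i + 1)) = exp (1 / 2 * (1 - log (i + 1))) := by
    rw [← exp_log (by positivity : (0 : ℝ) < i + 1), ← exp_sub, sqrt_eq_rpow, ← exp_mul, log_exp,
      mul_comm]
  have four_le_log : 4 ≤ log N := by
    rw [le_log_iff_exp_le (by linarith)]
    calc exp 4 = exp 1 ^ 4 := by rw [← exp_nat_mul, Nat.cast_ofNat, mul_one]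
      _ ≤ 3 ^ 4 := by gcongr; exact exp_one_lt_three.le
      _ ≤ (N : ℝ) := by linarith
  have div_le : (N / 1000 : ℕ) ≤ (N : ℝ) / 1000 := by exact_mod_cast Nat.cast_div_le
  rw [natCast_pow_eq_exp_mul_log (by lia), sqrt_eq, ← exp_nat_mul, ← exp_add, exp_le_exp]
  calc _ = 11 * i * log N + N / 2 * (1 - log (i + 1)) := by push_cast; ring
    _ ≤ -(N / 200) := by
        rcases le_total (i : ℝ) (√N) with hi_le | hi_ge
        · exact mul_log_add_mul_le_of_le_sqrt (by linarith) hlog (by exact_mod_cast hi) hi_le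
        · refine mul_log_add_mul_le_of_sqrt_le (by linarith) four_le_log hi_ge ?_
          have : (i : ℝ) ≤ 8 * (N / 1000 : ℕ) := by exact_mod_cast hiN
          linarith
    _ ≤ _ := by linarith

lemma two_mul_add_sqrt_div_two_le_pow (hN : 5 ≤ N) (hr : r ≤ 2 * (N : ℝ) ^ 3) :
    2 * (r + √N / 2) ≤ (N : ℝ) ^ 7 := by
  have five_le : (5 : ℝ) ≤ N := by exact_mod_cast hN
  have one_le : (1 : ℝ) ≤ N := by linarith
  calc 2 * (r + √N / 2) ≤ 4 * (N : ℝ) ^ 3 + N := by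
        linarith [sqrt_le_self_iff.2 (Or.inr one_le)]
    _ ≤ 4 * (N : ℝ) ^ 3 + (N : ℝ) ^ 3 := by
        gcongr
        exact le_self_pow₀ one_le three_ne_zero
    _ = 5 * (N : ℝ) ^ 3 := by ring
    _ ≤ N * (N : ℝ) ^ 3 := by gcongr
    _ = (N : ℝ) ^ 4 := by ring
    _ ≤ (N : ℝ) ^ 7 := pow_le_pow_right₀ one_le (by norm_num)

lemma exists_fewRelations (hN : 1000 ≤ N) (hlog : 440 * log N ≤ √N) :
    ∃ (q k : ℕ) (_ : Fact q.Prime) (r : ℝ) (S : Finset (Fin N → ℤ)),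
      (N : ℝ) ^ 3 ≤ r ∧ r ≤ 2 * (N : ℝ) ^ 3 ∧
      (N / 1000 : ℕ) * (q : ℝ) ^ k = unitBallVolume N * r ^ N ∧
      #S = N / 1000 * q ^ k ∧ (∀ s ∈ S, ∑ i, (s i : ℝ) ^ 2 ≤ (r + √N / 2) ^ 2) ∧
      Set.InjOn (reduceMod q N) S ∧
      FewRelations (ZMod q) (S.image (reduceMod q N)) (exp (-(5 * (N / 1000 : ℕ))))
        (8 * (N / 1000)) := by
  have hN' : (1000 : ℝ) ≤ N := by exact_mod_cast hN
  obtain ⟨q, hq, lt_q, q_le⟩ := Nat.exists_prime_lt_and_le_two_mul (N ^ 7) (by positivity)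
  have := Fact.mk hq
  have q_le' : q ≤ N ^ 8 :=
    calc q ≤ 2 * N ^ 7 := q_le
      _ ≤ N * N ^ 7 := by gcongr; lia
      _ = N ^ 8 := by ring
  have v_le : ((N / 1000 : ℕ) : ℝ) ≤ unitBallVolume N * ((N : ℝ) ^ 3) ^ N :=
    calc ((N / 1000 : ℕ) : ℝ) ≤ N := by exact_mod_cast Nat.div_le_self N 1000
      _ ≤ 20 * (N : ℝ) ^ 2 * exp (2 * N) := by
          nlinarith [one_le_exp (by positivity : (0 : ℝ) ≤ 2 * N), sq_nonneg (N : ℝ)]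
      _ ≤ _ := mul_exp_le_unitBallVolume_mul_pow (by lia)
  obtain ⟨k, r, le_r, r_le, mul_pow_eq⟩ := exists_mul_pow_eq_unitBallVolume_mul_pow (by lia)
    (by positivity) hq.one_lt (q_le'.trans (pow_eight_le_two_pow (by lia) hlog)) (by lia) v_le
  have hr₀ : 0 < r := lt_of_lt_of_le (by positivity) le_r
  obtain ⟨S, hS_card, hS⟩ := exists_finset_card_eq_of_le_unitBallVolume (N := N)
    (T := N / 1000 * q ^ k) (by lia) hr₀.le (by push_cast; exact mul_pow_eq.le)
  have two_mul_lt : 2 * (r + √N / 2) < q :=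
    (two_mul_add_sqrt_div_two_le_pow (by lia) r_le).trans_lt (by exact_mod_cast lt_q)
  have hS_inj := injOn_reduceMod (by positivity) two_mul_lt hS
  exact ⟨q, k, this, r, S, le_r, r_le, mul_pow_eq, hS_card, hS, hS_inj,
    fewRelations_image_reduceMod (by lia) (by lia) le_r r_le lt_q q_le'
      (by rw [hS_card]; push_cast; exact mul_pow_eq) hS hS_inj
      fun i hi hiN ↦ pow_mul_sqrt_pow_le_exp_neg hN hlog hi hiN⟩

lemma mul_exp_le_of_mul_eq (hN : 60 ≤ N) (hv : 0 < v) (hvN : v ≤ N) (hr : (N : ℝ) ^ 3 ≤ r) {Q : ℝ}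
    (hvQ : v * Q = unitBallVolume N * r ^ N) : 20 * v * exp (2 * v) ≤ Q := by
  have hvol := unitBallVolume_pos N
  refine le_of_mul_le_mul_left ?_ (Nat.cast_pos.2 hv : (0 : ℝ) < v)
  calc v * (20 * v * exp (2 * v)) = 20 * (v : ℝ) ^ 2 * exp (2 * v) := by ring
    _ ≤ 20 * (N : ℝ) ^ 2 * exp (2 * N) := by gcongr
    _ ≤ unitBallVolume N * ((N : ℝ) ^ 3) ^ N := mul_exp_le_unitBallVolume_mul_pow hN
    _ ≤ unitBallVolume N * r ^ N := by gcongr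
    _ = v * Q := hvQ.symm

lemma exists_coveringDensity_le_mul_pow (hn : N + 2 * M = n) (hlog : 440 * log N ≤ √N)
    (hM : 20000 * log N ≤ 4 ^ M) (hMN : 50000 * 4 ^ M ≤ N) :
    ∃ (b : Fin n → EuclideanSpace ℝ (Fin n)) (R : ℝ), 0 < R ∧ IsLatticeCovering b R ∧
      coveringDensity b R ≤ n * (8 * π * exp 1 / (3 * √3)) ^ M := by
  have one_le_pow : 1 ≤ 4 ^ M := Nat.one_le_pow' M 3
  have hN : 1000 ≤ N := by lia
  have hN' : (1000 : ℝ) ≤ N := by exact_mod_cast hN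
  obtain ⟨q, k, _, r, S, le_r, r_le, mul_pow_eq, hS_card, hS, hS_inj, hS_rel⟩ :=
    exists_fewRelations hN hlog
  set v := N / 1000
  have hN₀ : (0 : ℝ) < N := by linarith
  have hr₀ : 0 < r := (pow_pos hN₀ 3).trans_le le_r
  have hq₀ : (0 : ℝ) < (q : ℝ) ^ k := pow_pos (Nat.cast_pos.2 (Fact.out : q.Prime).pos) k
  have le_v : (N : ℝ) ≤ 2000 * v := by exact_mod_cast (by lia : N ≤ 2000 * v)
  have sq_le : 2 * M ^ 2 ≤ N := by
    have : M ^ 2 ≤ 4 ^ M := by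
      rw [show 4 = 2 ^ 2 from rfl, ← pow_mul, mul_comm, pow_mul]
      exact Nat.pow_le_pow_left (Nat.lt_two_pow_self).le 2
    lia
  have hK : 4 * (3 : ℝ) ^ (M + 1) ≤ exp (v / 2) :=
    calc 4 * (3 : ℝ) ^ (M + 1) = 12 * 3 ^ M := by ring
      _ ≤ 12 * 4 ^ M := by gcongr; norm_num
      _ ≤ N / 4000 := by
          have : 50000 * (4 : ℝ) ^ M ≤ N := by exact_mod_cast hMN
          linarith [pow_pos (by norm_num : (0 : ℝ) < 4) M]
      _ ≤ exp (v / 2) := by linarith [add_one_le_exp ((v : ℝ) / 2)]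
  have hT : 4 * N * log N < v / 2 * 4 ^ M := by
    have : 0 < log N := log_pos (by linarith)
    calc 4 * N * log N < v / 2 * (20000 * log N) := by nlinarith
      _ ≤ _ := by gcongr
  have hs : √(3 * r ^ 2 / (2 * N)) ^ 2 = 3 * r ^ 2 / (2 * N) := sq_sqrt (by positivity)
  obtain ⟨b, hb, hb_det⟩ := exists_isLatticeCovering_of_fewRelations
    (s := √(3 * r ^ 2 / (2 * N))) hn (by lia) (by positivity) (sqrt_pos.2 (by positivity)) hS
    hS_inj hS_card (exp_pos _).le le_rfl hS_rel
    (mul_exp_le_of_mul_eq (by lia) (by lia) (by lia) le_r mul_pow_eq)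
    (by rw [pow_succ']; gcongr; norm_num)
    (pow_four_pow_mul_lt (one_le_pow₀ (by norm_num)) hK hq₀.le
      (pow_le_exp_mul_log (by lia) (by lia) hr₀.le r_le hq₀.le mul_pow_eq) hT)
  exact ⟨b, _, sqrt_pos.2 (by positivity), hb,
    coveringDensity_le_mul_pow hn (by lia) sq_le le_r hs (by lia) hq₀ mul_pow_eq hb_det⟩

end Parameters

/-! ### Asymptotics in the dimension -/

section Asymptotics

open Filter Real

lemma coveringDensity_nonneg {n : ℕ} (b : Fin n → EuclideanSpace ℝ (Fin n)) (r : ℝ) :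
    0 ≤ coveringDensity b r :=
  div_nonneg ENNReal.toReal_nonneg (abs_nonneg _)

lemma isLatticeCovering_columnVectors_one {n : ℕ} {r : ℝ} (hr : √n / 2 ≤ r) :
    IsLatticeCovering (columnVectors (Equiv.refl (Fin n)) 1) r := by
  have hr₀ : 0 ≤ r := le_trans (by positivity) hr
  refine isLatticeCovering_columnVectors _ (Matrix.det_one.trans_ne one_ne_zero) hr₀
    fun y ↦ ⟨fun i ↦ round (y i), ?_⟩
  rw [Matrix.one_mulVec]
  exact (sum_sub_round_sq_le y).trans (by gcongr)

lemma eventually_mul_log_le_sqrt (c : ℝ) : ∀ᶠ n : ℕ in atTop, c * log n ≤ √n := by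
  have := ((isLittleO_log_rpow_atTop (by norm_num : (0 : ℝ) < 1 / 2)).const_mul_left c).comp_tendsto
    tendsto_natCast_atTop_atTop
  filter_upwards [this.bound one_pos] with n hn
  rw [one_mul, Function.comp_apply, Function.comp_apply, ← sqrt_eq_rpow,
    norm_of_nonneg (sqrt_nonneg _)] at hn
  exact (le_norm_self _).trans hn

lemma one_le_density_base : 1 ≤ 8 * π * exp 1 / (3 * √3) := by
  have sqrt_three_le : √3 ≤ 3 := sqrt_le_self_iff.2 (Or.inr (by norm_num))
  rw [one_le_div (by positivity)]
  nlinarith [pi_gt_three, one_lt_exp_iff.2 one_pos]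

lemma pow_eq_four_pow_rpow {D : ℝ} (hD : 0 < D) (M : ℕ) :
    D ^ M = ((4 : ℝ) ^ M) ^ (logb 2 D / 2) := by
  calc D ^ M = ((2 : ℝ) ^ logb 2 D) ^ M := by rw [rpow_logb two_pos (by norm_num) hD]
    _ = (4 ^ (logb 2 D / 2)) ^ M := by
        rw [show (4 : ℝ) = 2 ^ (2 : ℝ) by norm_num, ← rpow_mul two_pos.le,
          mul_div_cancel₀ _ two_ne_zero]
    _ = _ := by rw [← rpow_natCast, ← rpow_natCast, ← rpow_mul zero_le_four, mul_comm,
          rpow_mul zero_le_four]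

lemma exists_coveringDensity_le_of_mul_log_le_sqrt {n : ℕ} (hn : 3 ≤ n)
    (hlog : 10 ^ 10 * log n ≤ √n) :
    ∃ (b : Fin n → EuclideanSpace ℝ (Fin n)) (r : ℝ), 0 < r ∧ IsLatticeCovering b r ∧
      coveringDensity b r ≤ 80000 ^ (logb 2 (8 * π * exp 1 / (3 * √3)) / 2) *
        (n * log n ^ (logb 2 (8 * π * exp 1 / (3 * √3)) / 2)) := by
  have one_le_log : 1 ≤ log n := by
    rw [le_log_iff_exp_le (by positivity)]
    exact exp_one_lt_three.le.trans (by exact_mod_cast hn)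
  obtain ⟨M, le_log, log_lt⟩ :=
    exists_nat_pow_near (by linarith : 1 ≤ 80000 * log n) (by norm_num : (1 : ℝ) < 4)
  have sqrt_le : √n ≤ n := sqrt_le_self_iff.2 (Or.inr (by exact_mod_cast (by lia : 1 ≤ n)))
  have mul_pow_le : 100000 * 4 ^ M ≤ n := by
    have : 100000 * (4 : ℝ) ^ M ≤ n := by linarith
    exact_mod_cast this
  have M_le : M ≤ 4 ^ M := (Nat.lt_pow_self (by norm_num)).le
  obtain ⟨N, hN⟩ : ∃ N, N + 2 * M = n := ⟨n - 2 * M, by lia⟩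
  have n_le : (n : ℝ) ≤ 2 * N := by exact_mod_cast (by lia : n ≤ 2 * N)
  have log_le : log N ≤ log n :=
    log_le_log (by linarith [(by exact_mod_cast hn : (3 : ℝ) ≤ n)]) (by exact_mod_cast (by lia))
  have sqrt_le_two_mul : √n ≤ 2 * √N := by
    rw [sqrt_le_left (by positivity), mul_pow, sq_sqrt (by positivity)]
    linarith
  obtain ⟨b, R, hR, hb, hb_density⟩ := exists_coveringDensity_le_mul_pow hN (by linarith)
    (by rw [pow_succ] at log_lt; linarith) (by lia)
  have one_le_base := one_le_density_base
  refine ⟨b, R, hR, hb, hb_density.trans ?_⟩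
  rw [pow_eq_four_pow_rpow (by linarith), mul_left_comm, ← mul_rpow (by norm_num) (by linarith)]
  gcongr
  exact div_nonneg (logb_nonneg one_lt_two one_le_base) zero_le_two

lemma exists_isLatticeCovering (n : ℕ) :
    ∃ (b : Fin n → EuclideanSpace ℝ (Fin n)) (r : ℝ), 0 < r ∧ IsLatticeCovering b r ∧
      (3 ≤ n → 10 ^ 10 * log n ≤ √n →
        coveringDensity b r ≤ 80000 ^ (logb 2 (8 * π * exp 1 / (3 * √3)) / 2) *
          (n * log n ^ (logb 2 (8 * π * exp 1 / (3 * √3)) / 2))) := by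
  by_cases hn : 3 ≤ n ∧ 10 ^ 10 * log n ≤ √n
  · obtain ⟨b, r, hr, hb, hb_density⟩ := exists_coveringDensity_le_of_mul_log_le_sqrt hn.1 hn.2
    exact ⟨b, r, hr, hb, fun _ _ ↦ hb_density⟩
  · exact ⟨_, √n / 2 + 1, by positivity, isLatticeCovering_columnVectors_one (by linarith),
      fun h₃ hlog ↦ (hn ⟨h₃, hlog⟩).elim⟩

end Asymptotics

/-- **Theorem 1.1.** There is a constant `C > 0` such that for every `n ≥ 2` there is a
lattice covering of `ℝⁿ` by balls of density at most `C · n · (ln n)^β`, where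
`β = (1/2) log₂ (8πe/(3√3))`. -/
theorem new_upper_bound_for_lattice_covering :
    ∃ C : ℝ, 0 < C ∧ ∀ n : ℕ, 2 ≤ n →
      ∃ (b : Fin n → EuclideanSpace ℝ (Fin n)) (r : ℝ), 0 < r ∧
        IsLatticeCovering b r ∧
        coveringDensity b r ≤
          C * n * Real.log n ^
            (Real.logb 2 (8 * Real.pi * Real.exp 1 / (3 * Real.sqrt 3)) / 2) := by
  choose b r hr hb hb_density using exists_isLatticeCovering
  set β := Real.logb 2 (8 * Real.pi * Real.exp 1 / (3 * Real.sqrt 3)) / 2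
  have isBigO : (fun n ↦ coveringDensity (b n) (r n)) =O[Filter.atTop]
      fun n : ℕ ↦ n * Real.log n ^ β := by
    refine .of_bound (80000 ^ β) ?_
    filter_upwards [Filter.eventually_ge_atTop 3, eventually_mul_log_le_sqrt (10 ^ 10)]
      with n hn hlog
    rw [Real.norm_of_nonneg (coveringDensity_nonneg _ _), Real.norm_of_nonneg (by positivity)]
    exact hb_density n hn hlog
  obtain ⟨C, hC, hbound⟩ := Asymptotics.bound_of_isBigO_nat_atTop isBigO
  refine ⟨C, hC, fun n hn ↦ ⟨b n, r n, hr n, hb n, ?_⟩⟩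
  have log_pos : 0 < Real.log n := Real.log_pos (by exact_mod_cast hn)
  have norm_le := hbound (x := n) (by positivity)
  rwa [Real.norm_of_nonneg (coveringDensity_nonneg _ _), Real.norm_of_nonneg (by positivity),
    ← mul_assoc] at norm_le

end
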